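/- Let M : ℝ² → ℝ be smooth with all partial derivatives up to order 9 square-integrable on ℝ², and let Ω := {x∈ℝ³ : x₁ > M(x₂,x₃)}. For every integer k ≥ 0 there exists a constant C > 0 (depending only on k and M) such that for all (k+1)-times continuously differentiable functions f, g : closure(Ω) → ℝ with sup_Ω |∇f| < ∞, sup_Ω |g| < ∞, ‖∇f‖_{H^k(Ω)} < ∞, and ‖g‖_{H^k(Ω)} < ∞, the commutator [∇^{k+1}, f]g := ∇^{k+1}(fg) − f·∇^{k+1}g satisfies ‖[∇^{k+1}, f]g‖_{L²(Ω)} ≤ C ( sup_Ω|∇f| · ‖g‖_{H^k(Ω)} + ‖∇f‖_{H^k(Ω)} · sup_Ω|g| ). -/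

import Mathlib

/- STATEMENT 7: Moser-type commutator estimate
‖[∇^{k+1}, f]g‖_{L²(Ω)} ≤ C (sup|∇f|‖g‖_{H^k} + ‖∇f‖_{H^k} sup|g|)
on the perturbed half-space Ω = {x ∈ ℝ³ : x₁ > M(x₂,x₃)}. -/

noncomputable section

open MeasureTheory Real Set Filter

abbrev E3 : Type := EuclideanSpace ℝ (Fin 3)
abbrev E2 : Type := EuclideanSpace ℝ (Fin 2)

/-- Projection on the tangential variables `x' = (x₂, x₃)`. -/
def proj2 (x : E3) : E2 := (WithLp.equiv 2 (Fin 2 → ℝ)).symm ![x 1, x 2]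

/-- The perturbed half-space `Ω = {x : x₁ > M(x₂,x₃)}`. -/
def Omg (M : E2 → ℝ) : Set E3 := {x : E3 | M (proj2 x) < x 0}

/-- The `H^m(O)` Sobolev norm, `(∑_{j=0}^m ∫_O |∇^j f|² dx)^{1/2}`,
for functions with values in a normed space `F`. -/
def sobNorm {F : Type*} [NormedAddCommGroup F] [NormedSpace ℝ F]
    (m : ℕ) (O : Set E3) (f : E3 → F) : ℝ :=
  Real.sqrt (∑ j ∈ Finset.range (m + 1), ∫ x in O, ‖iteratedFDeriv ℝ j f x‖ ^ 2)

/-!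
Subtracting the constant `f x` before applying the Leibniz rule at `x` bounds `[∇ᵏ⁺¹, f] g` by the
products `|∇ⁱ∇f| |∇ᵏ⁻ⁱg|` with `i ≤ k`. These are estimated pointwise, without extending `f` and
`g` across the boundary. Since `M` is Lipschitz, `Ω` is mapped into itself by translation in an open
cone of directions. On a ray in such a direction, Taylor's formula at `k + 1` equidistant points and
the inversion of a Vandermonde matrix give `hⁱ |∇ⁱU| ≲ sup |U| + hᵏ Φ` at every scale `h > 0`,
where `Φ` is the one-sided directional maximal function of `|∇ᵏU|`; polarization passes from
directional derivatives to the full derivative. The choice of `h` that balances the two terms bounds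
the products by `sup |∇f| Γ + Φ sup |g|`, with `Φ` and `Γ` belonging to `∇f` and `g`. Finally `Φ` is
bounded in `L²` by the maximal ergodic inequality for a translation.
-/

open scoped ENNReal NNReal Topology

lemma sq_sum_le_card_mul_sum_sq_ennreal {ι : Type*} (s : Finset ι) (f : ι → ℝ≥0∞) :
    (∑ i ∈ s, f i) ^ 2 ≤ s.card * ∑ i ∈ s, f i ^ 2 := by
  have h := ENNReal.rpow_sum_le_const_mul_sum_rpow s f one_le_two
  norm_num at h
  exact h

lemma sq_lintegral_mul_le {X : Type*} [MeasurableSpace X] {μ : Measure X} {f g : X → ℝ≥0∞}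
    (hf : AEMeasurable f μ) (hg : AEMeasurable g μ) :
    (∫⁻ x, f x * g x ∂μ) ^ 2 ≤ (∫⁻ x, f x ^ 2 ∂μ) * ∫⁻ x, g x ^ 2 ∂μ := by
  have holder := ENNReal.lintegral_mul_le_Lp_mul_Lq μ Real.HolderConjugate.two_two hf hg
  simp only [Pi.mul_apply, ENNReal.rpow_two] at holder
  calc (∫⁻ x, f x * g x ∂μ) ^ 2
      ≤ ((∫⁻ x, f x ^ 2 ∂μ) ^ (1 / 2 : ℝ) * (∫⁻ x, g x ^ 2 ∂μ) ^ (1 / 2 : ℝ)) ^ 2 := by gcongr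
    _ = (∫⁻ x, f x ^ 2 ∂μ) * ∫⁻ x, g x ^ 2 ∂μ := by
        simp only [mul_pow, ← ENNReal.rpow_two, ← ENNReal.rpow_mul]
        norm_num

section MaximalErgodic

variable {X : Type*}

/-- The largest of the first `N` Birkhoff averages of a function with values in `ℝ≥0∞`. -/
def birkhoffMaximal (τ : X → X) (W : X → ℝ≥0∞) (N : ℕ) (x : X) : ℝ≥0∞ :=
  (Finset.range N).sup fun n => birkhoffSum τ W (n + 1) x / (n + 1 : ℕ)

/-- Garsia's auxiliary function: the largest amount by which one of the Birkhoff sums `S_n W`,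
`n ≤ N`, exceeds `n * c`. -/
def birkhoffExcess (τ : X → X) (W : X → ℝ≥0∞) (c : ℝ≥0∞) (N : ℕ) (x : X) : ℝ≥0∞ :=
  (Finset.range (N + 1)).sup fun n => birkhoffSum τ W n x - n * c

variable {τ : X → X} {W : X → ℝ≥0∞} {c : ℝ≥0∞} {N : ℕ} {x : X}

lemma lt_birkhoffMaximal_iff_birkhoffExcess_pos :
    c < birkhoffMaximal τ W N x ↔ 0 < birkhoffExcess τ W c N x := by
  have average_iff (n : ℕ) : c < birkhoffSum τ W (n + 1) x / (n + 1 : ℕ) ↔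
      ((n + 1 : ℕ) : ℝ≥0∞) * c < birkhoffSum τ W (n + 1) x := by
    rw [ENNReal.lt_div_iff_mul_lt (by simp) (by simp), mul_comm]
  simp only [birkhoffMaximal, birkhoffExcess, Finset.lt_sup_iff, Finset.mem_range, tsub_pos_iff_lt,
    average_iff]
  constructor
  · rintro ⟨n, hn, hlt⟩
    exact ⟨n + 1, by omega, hlt⟩
  · rintro ⟨_ | n, hn, hlt⟩
    · simp at hlt
    · exact ⟨n, by omega, hlt⟩

lemma birkhoffExcess_add_le (h : 0 < birkhoffExcess τ W c N x) :
    birkhoffExcess τ W c N x + c ≤ W x + birkhoffExcess τ W c N (τ x) := by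
  obtain ⟨n, hn, hmax⟩ := Finset.exists_mem_eq_sup (Finset.range (N + 1)) ⟨0, by simp⟩
    fun n => birkhoffSum τ W n x - n * c
  change birkhoffExcess τ W c N x = _ at hmax
  rw [hmax, tsub_pos_iff_lt] at h
  rw [hmax]
  rcases n with _ | m
  · simp at h
  have hsplit : ((m + 1 : ℕ) : ℝ≥0∞) * c = m * c + c := by push_cast; ring
  rw [hsplit] at h ⊢
  calc birkhoffSum τ W (m + 1) x - (m * c + c) + c
      = birkhoffSum τ W (m + 1) x - m * c := by
        rw [← tsub_tsub, tsub_add_cancel_of_le (lt_tsub_iff_left.2 h).le]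
    _ ≤ W x + (birkhoffSum τ W m (τ x) - m * c) := by
        rw [birkhoffSum_succ']
        exact add_tsub_le_assoc
    _ ≤ W x + birkhoffExcess τ W c N (τ x) := by
        gcongr
        exact Finset.le_sup (f := fun n : ℕ => birkhoffSum τ W n (τ x) - n * c)
          (Finset.mem_range.2 (by simp at hn; omega))

lemma birkhoffExcess_le_birkhoffSum_sub :
    birkhoffExcess τ W c N x ≤ birkhoffSum τ (fun y => W y - c) N x := by
  refine Finset.sup_le fun n hn => ?_
  calc birkhoffSum τ W n x - n * c ≤ birkhoffSum τ (fun y => W y - c) n x := by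
        rw [tsub_le_iff_right]
        calc birkhoffSum τ W n x ≤ ∑ i ∈ Finset.range n, ((W (τ^[i] x) - c) + c) :=
              Finset.sum_le_sum fun i _ => le_tsub_add
          _ = birkhoffSum τ (fun y => W y - c) n x + n * c := by
              simp [Finset.sum_add_distrib, birkhoffSum]
    _ ≤ birkhoffSum τ (fun y => W y - c) N x :=
        Finset.sum_le_sum_of_subset (Finset.range_mono (by simp at hn; omega))

lemma birkhoffMaximal_le_birkhoffSum : birkhoffMaximal τ W N x ≤ birkhoffSum τ W N x := by
  refine Finset.sup_le fun n hn => ?_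
  calc birkhoffSum τ W (n + 1) x / (n + 1 : ℕ) ≤ birkhoffSum τ W (n + 1) x :=
        ENNReal.div_le_of_le_mul (le_mul_of_one_le_right' (by simp))
    _ ≤ birkhoffSum τ W N x :=
        Finset.sum_le_sum_of_subset (Finset.range_mono (by simp at hn; omega))

variable [MeasurableSpace X] {μ : Measure X}

lemma measurable_birkhoffSum_of_measurable (hτ : Measurable τ) (hW : Measurable W) (n : ℕ) :
    Measurable (birkhoffSum τ W n) :=
  Finset.measurable_fun_sum _ fun i _ => hW.comp (hτ.iterate i)

lemma measurable_birkhoffMaximal (hτ : Measurable τ) (hW : Measurable W) (N : ℕ) :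
    Measurable (birkhoffMaximal τ W N) := by
  unfold birkhoffMaximal
  simp only [Finset.sup_eq_iSup]
  exact .biSup _ (Finset.range N).countable_toSet fun n _ =>
    (measurable_birkhoffSum_of_measurable hτ hW (n + 1)).div_const _

lemma measurable_birkhoffExcess (hτ : Measurable τ) (hW : Measurable W) (c : ℝ≥0∞) (N : ℕ) :
    Measurable (birkhoffExcess τ W c N) := by
  unfold birkhoffExcess
  simp only [Finset.sup_eq_iSup]
  exact .biSup _ (Finset.range (N + 1)).countable_toSet fun n _ =>
    (measurable_birkhoffSum_of_measurable hτ hW n).sub_const _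

lemma lintegral_birkhoffSum (hτ : MeasurePreserving τ μ μ) (hW : Measurable W) (n : ℕ) :
    ∫⁻ x, birkhoffSum τ W n x ∂μ = n * ∫⁻ x, W x ∂μ := by
  simp only [birkhoffSum]
  rw [lintegral_finsetSum _ fun i _ => by exact hW.comp (hτ.measurable.iterate i)]
  simp [(hτ.iterate _).lintegral_comp hW]

lemma lintegral_birkhoffExcess_ne_top (hτ : MeasurePreserving τ μ μ) (hW : Measurable W)
    (hint : ∫⁻ x in {x | c < birkhoffMaximal τ W N x}, W x ∂μ ≠ ∞) :
    ∫⁻ x, birkhoffExcess τ W c N x ∂μ ≠ ∞ := by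
  rcases N with _ | N
  · simp [birkhoffExcess]
  have hsub : ∫⁻ x, (W x - c) ∂μ ≠ ∞ := by
    refine ne_top_of_le_ne_top hint ?_
    rw [← lintegral_indicator (measurableSet_lt measurable_const
      (measurable_birkhoffMaximal hτ.measurable hW (N + 1)))]
    refine lintegral_mono fun x => ?_
    by_cases hx : c < W x
    · have : c < birkhoffMaximal τ W (N + 1) x := hx.trans_le <|
        (by simp : W x = birkhoffSum τ W (0 + 1) x / (0 + 1 : ℕ)).trans_le <|
        Finset.le_sup (f := fun n => birkhoffSum τ W (n + 1) x / (n + 1 : ℕ)) (by simp)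
      simp [indicator_of_mem (show x ∈ {x | c < birkhoffMaximal τ W (N + 1) x} from this)]
    · simp [tsub_eq_zero_of_le (not_lt.1 hx)]
  refine ne_top_of_le_ne_top ?_ (lintegral_mono fun x => birkhoffExcess_le_birkhoffSum_sub)
  rw [lintegral_birkhoffSum hτ (hW.sub_const c)]
  finiteness

theorem mul_meas_lt_birkhoffMaximal_le (hτ : MeasurePreserving τ μ μ) (hW : Measurable W)
    (c : ℝ≥0∞) (N : ℕ) :
    c * μ {x | c < birkhoffMaximal τ W N x} ≤
      ∫⁻ x in {x | c < birkhoffMaximal τ W N x}, W x ∂μ := by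
  by_cases hint : ∫⁻ x in {x | c < birkhoffMaximal τ W N x}, W x ∂μ = ∞
  · simp [hint]
  have hGfin := lintegral_birkhoffExcess_ne_top hτ hW hint
  set E := {x | c < birkhoffMaximal τ W N x}
  have hE : MeasurableSet E :=
    measurableSet_lt measurable_const (measurable_birkhoffMaximal hτ.measurable hW N)
  have hG := measurable_birkhoffExcess hτ.measurable hW c N
  have hsupp : ∫⁻ x, birkhoffExcess τ W c N x ∂μ = ∫⁻ x in E, birkhoffExcess τ W c N x ∂μ := by
    refine (setLIntegral_eq_of_support_subset fun x hx => ?_).symm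
    exact lt_birkhoffMaximal_iff_birkhoffExcess_pos.2 (pos_iff_ne_zero.2 hx)
  refine (ENNReal.add_le_add_iff_left hGfin).1 ?_
  calc ∫⁻ x, birkhoffExcess τ W c N x ∂μ + c * μ E
      = ∫⁻ x in E, (birkhoffExcess τ W c N x + c) ∂μ := by
        rw [lintegral_add_left hG, ← hsupp, setLIntegral_const]
    _ ≤ ∫⁻ x in E, (W x + birkhoffExcess τ W c N (τ x)) ∂μ :=
        setLIntegral_mono' hE fun x hx =>
          birkhoffExcess_add_le (lt_birkhoffMaximal_iff_birkhoffExcess_pos.1 hx)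
    _ ≤ ∫⁻ x in E, W x ∂μ + ∫⁻ x, birkhoffExcess τ W c N (τ x) ∂μ := by
        rw [lintegral_add_left hW]
        exact add_le_add_right (setLIntegral_le_lintegral _ _) _
    _ = ∫⁻ x, birkhoffExcess τ W c N x ∂μ + ∫⁻ x in E, W x ∂μ := by
        rw [hτ.lintegral_comp hG, add_comm]

lemma lintegral_mul_self_le_of_weak_type {M W : X → ℝ≥0∞} (hM : Measurable M) (hW : Measurable W)
    (hfin : ∫⁻ x, M x ^ 2 ∂μ ≠ ∞)
    (hweak : ∀ c, c * μ {x | c < M x} ≤ ∫⁻ x in {x | c < M x}, W x ∂μ) :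
    ∫⁻ x, M x ^ 2 ∂μ ≤ 2 * ∫⁻ x, M x * W x ∂μ := by
  have hM_lt_top : ∀ᵐ x ∂μ, M x < ∞ :=
    (ae_lt_top (hM.pow_const 2) hfin).mono fun x hx => by
      simpa using hx
  have hofReal : ∀ᵐ x ∂μ, ENNReal.ofReal (M x).toReal = M x :=
    hM_lt_top.mono fun x hx => ENNReal.ofReal_toReal hx.ne
  have hlevel (t : ℝ) (ht : 0 < t) : {x | t < (M x).toReal} =ᵐ[μ] {x | ENNReal.ofReal t < M x} := by
    filter_upwards [hM_lt_top] with x hx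
    exact propext (ENNReal.ofReal_lt_iff_lt_toReal ht.le hx.ne).symm
  have hν : μ.withDensity W ≪ μ := withDensity_absolutelyContinuous _ _
  have hnn : 0 ≤ᵐ[μ] fun x => (M x).toReal := .of_forall fun x => ENNReal.toReal_nonneg
  have hmeas := hM.ennreal_toReal
  have hdensity : ∫⁻ x, ENNReal.ofReal (M x).toReal ∂(μ.withDensity W) = ∫⁻ x, M x * W x ∂μ := by
    rw [lintegral_congr_ae (hν.ae_le hofReal), lintegral_withDensity_eq_lintegral_mul _ hW hM]
    simp [mul_comm]
  calc ∫⁻ x, M x ^ 2 ∂μ = ∫⁻ x, ENNReal.ofReal ((M x).toReal ^ (2 : ℝ)) ∂μ := by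
        refine lintegral_congr_ae (hofReal.mono fun x hx => ?_)
        simp [ENNReal.ofReal_pow, hx]
    _ = ENNReal.ofReal 2 *
          ∫⁻ t in Ioi 0, μ {x | t < (M x).toReal} * ENNReal.ofReal (t ^ ((2 : ℝ) - 1)) :=
        lintegral_rpow_eq_lintegral_meas_lt_mul μ hnn hmeas.aemeasurable two_pos
    _ ≤ 2 * ∫⁻ t in Ioi 0, μ.withDensity W {x | t < (M x).toReal} := by
        rw [ENNReal.ofReal_ofNat]
        gcongr 2 * ?_
        refine setLIntegral_mono' measurableSet_Ioi fun t ht => ?_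
        rw [measure_congr (hlevel t ht), measure_congr (hν.ae_le (hlevel t ht)),
          withDensity_apply _ (measurableSet_lt measurable_const hM), mul_comm]
        norm_num
        exact hweak _
    _ = 2 * ∫⁻ x, M x * W x ∂μ := by
        rw [← lintegral_eq_lintegral_meas_lt _ (hν.ae_le hnn) hmeas.aemeasurable, hdensity]

lemma lintegral_sq_le_four_mul_of_weak_type {M W : X → ℝ≥0∞} (hM : Measurable M)
    (hW : Measurable W) (hfin : ∫⁻ x, M x ^ 2 ∂μ ≠ ∞)
    (hweak : ∀ c, c * μ {x | c < M x} ≤ ∫⁻ x in {x | c < M x}, W x ∂μ) :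
    ∫⁻ x, M x ^ 2 ∂μ ≤ 4 * ∫⁻ x, W x ^ 2 ∂μ := by
  have hself := lintegral_mul_self_le_of_weak_type hM hW hfin hweak
  set a := ∫⁻ x, M x ^ 2 ∂μ
  set b := ∫⁻ x, W x ^ 2 ∂μ
  rcases eq_or_ne a 0 with ha | ha
  · simp [ha]
  refine (ENNReal.mul_le_mul_iff_right ha hfin).1 ?_
  calc a * a = a ^ 2 := (sq a).symm
    _ ≤ (2 * ∫⁻ x, M x * W x ∂μ) ^ 2 := by gcongr
    _ = 4 * (∫⁻ x, M x * W x ∂μ) ^ 2 := by ring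
    _ ≤ 4 * (a * b) := by gcongr; exact sq_lintegral_mul_le hM.aemeasurable hW.aemeasurable
    _ = a * (4 * b) := by ring

theorem lintegral_birkhoffMaximal_sq_le (hτ : MeasurePreserving τ μ μ) (hW : Measurable W)
    (N : ℕ) : ∫⁻ x, birkhoffMaximal τ W N x ^ 2 ∂μ ≤ 4 * ∫⁻ x, W x ^ 2 ∂μ := by
  by_cases hint : ∫⁻ x, W x ^ 2 ∂μ = ∞
  · simp [hint]
  refine lintegral_sq_le_four_mul_of_weak_type
    (measurable_birkhoffMaximal hτ.measurable hW N) hW ?_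
    fun c => mul_meas_lt_birkhoffMaximal_le hτ hW c N
  have hbound (x : X) : birkhoffMaximal τ W N x ^ 2 ≤
      N * birkhoffSum τ (fun y => W y ^ 2) N x :=
    calc birkhoffMaximal τ W N x ^ 2 ≤ birkhoffSum τ W N x ^ 2 := by
          gcongr
          exact birkhoffMaximal_le_birkhoffSum
      _ ≤ N * birkhoffSum τ (fun y => W y ^ 2) N x := by
          simpa [birkhoffSum] using sq_sum_le_card_mul_sum_sq_ennreal (Finset.range N)
            fun n => W (τ^[n] x)
  refine ne_top_of_le_ne_top ?_ (lintegral_mono hbound)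
  rw [lintegral_const_mul _ (measurable_birkhoffSum_of_measurable hτ.measurable (hW.pow_const 2) N),
    lintegral_birkhoffSum hτ (hW.pow_const 2)]
  finiteness

end MaximalErgodic

section RayMaximal

variable {E : Type*} [AddCommGroup E] [Module ℝ E]

/-- The mean of `w` over the segment from `x` to `x + h • v`. -/
def rayAverage (v : E) (w : E → ℝ≥0∞) (h : ℝ) (x : E) : ℝ≥0∞ :=
  (∫⁻ t in Ioc 0 h, w (x + t • v)) / ENNReal.ofReal h

/-- The largest mean of `w` over the segments from `x` to `x + (n / 2 ^ m) • v`,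
`1 ≤ n ≤ 4 ^ m`. -/
def dyadicRayMaximal (v : E) (w : E → ℝ≥0∞) (m : ℕ) (x : E) : ℝ≥0∞ :=
  (Finset.range (4 ^ m)).sup fun n => rayAverage v w ((n + 1 : ℕ) / 2 ^ m) x

/-- The one-sided maximal function of `w` in direction `v`. The supremum runs over the segments of
dyadic length only, which keeps it measurable and costs a factor `2`
(`setLIntegral_ray_le_rayMaximal`). -/
def rayMaximal (v : E) (w : E → ℝ≥0∞) (x : E) : ℝ≥0∞ := ⨆ m, dyadicRayMaximal v w m x

variable {v : E} {w : E → ℝ≥0∞} {h : ℝ}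

lemma rayAverage_le_dyadicRayMaximal {m n : ℕ} (hn : 0 < n) (hnm : n ≤ 4 ^ m) (x : E) :
    rayAverage v w (n / 2 ^ m) x ≤ dyadicRayMaximal v w m x := by
  obtain ⟨n, rfl⟩ := Nat.exists_eq_add_one.2 hn
  exact Finset.le_sup (f := fun n => rayAverage v w ((n + 1 : ℕ) / 2 ^ m) x)
    (Finset.mem_range.2 hnm)

lemma monotone_dyadicRayMaximal (x : E) : Monotone fun m => dyadicRayMaximal v w m x := by
  refine monotone_nat_of_le_succ fun m => Finset.sup_le fun n hn => ?_
  have hlength : ((n + 1 : ℕ) : ℝ) / 2 ^ m = (2 * (n + 1) : ℕ) / 2 ^ (m + 1) := by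
    push_cast
    field_simp
    ring
  rw [hlength]
  refine rayAverage_le_dyadicRayMaximal (by omega) ?_ x
  have := Finset.mem_range.1 hn
  rw [pow_succ]
  omega

lemma exists_dyadic_length (hh : 0 < h) :
    ∃ m n : ℕ, 0 < n ∧ n ≤ 4 ^ m ∧ h ≤ n / 2 ^ m ∧ (n : ℝ) / 2 ^ m ≤ 2 * h := by
  obtain ⟨m, hm⟩ := pow_unbounded_of_one_lt (max h h⁻¹) one_lt_two
  have h_lt : h < 2 ^ m := (le_max_left _ _).trans_lt hm
  have one_lt : 1 < h * 2 ^ m := by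
    have := (le_max_right _ _).trans_lt hm
    rwa [inv_lt_iff_one_lt_mul₀' hh] at this
  have hceil := Nat.ceil_lt_add_one (a := h * 2 ^ m) (by positivity)
  refine ⟨m, ⌈h * 2 ^ m⌉₊, Nat.ceil_pos.2 (by positivity), ?_, ?_, ?_⟩
  · rw [Nat.ceil_le]
    push_cast
    calc h * 2 ^ m ≤ 2 ^ m * 2 ^ m := by gcongr
      _ = 4 ^ m := by rw [← mul_pow]; norm_num
  · rw [le_div_iff₀ (by positivity)]
    exact Nat.le_ceil _
  · rw [div_le_iff₀ (by positivity)]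
    linarith

lemma setLIntegral_ray_le_rayMaximal (hh : 0 < h) (x : E) :
    ∫⁻ t in Ioc 0 h, w (x + t • v) ≤ ENNReal.ofReal (2 * h) * rayMaximal v w x := by
  obtain ⟨m, n, hn, hnm, hle, hle_two⟩ := exists_dyadic_length hh
  have hpos : 0 < (n : ℝ) / 2 ^ m := by positivity
  calc ∫⁻ t in Ioc 0 h, w (x + t • v)
      ≤ ∫⁻ t in Ioc 0 ((n : ℝ) / 2 ^ m), w (x + t • v) :=
        lintegral_mono_set (Ioc_subset_Ioc_right hle)
    _ = ENNReal.ofReal (n / 2 ^ m) * rayAverage v w (n / 2 ^ m) x :=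
        (ENNReal.mul_div_cancel (by simpa using hpos) (by finiteness)).symm
    _ ≤ ENNReal.ofReal (2 * h) * rayMaximal v w x := by
        gcongr
        exact (rayAverage_le_dyadicRayMaximal hn hnm x).trans
          (le_iSup (fun m => dyadicRayMaximal v w m x) m)

lemma le_rayMaximal_zero (w : E → ℝ≥0∞) (x : E) : w x ≤ rayMaximal 0 w x :=
  calc w x = rayAverage 0 w ((1 : ℕ) / 2 ^ 0) x := by simp [rayAverage]
    _ ≤ dyadicRayMaximal 0 w 0 x := rayAverage_le_dyadicRayMaximal one_pos (by simp) x
    _ ≤ rayMaximal 0 w x := le_iSup (fun m => dyadicRayMaximal 0 w m x) 0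

/-- The sum of the one-sided maximal functions of `w` in the directions of the finite set `V`. -/
def multiRayMaximal (V : Finset E) (w : E → ℝ≥0∞) (x : E) : ℝ≥0∞ := ∑ v ∈ V, rayMaximal v w x

lemma rayMaximal_le_multiRayMaximal {V : Finset E} (hv : v ∈ V) (x : E) :
    rayMaximal v w x ≤ multiRayMaximal V w x :=
  Finset.single_le_sum (f := fun v => rayMaximal v w x) (fun _ _ => zero_le) hv

variable [MeasurableSpace E] [MeasurableAdd₂ E] [MeasurableSMul₂ ℝ E]

lemma measurable_rayAverage (hw : Measurable w) (v : E) (h : ℝ) :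
    Measurable (rayAverage v w h) :=
  (Measurable.lintegral_prod_right' (f := fun p : E × ℝ => w (p.1 + p.2 • v))
    (by fun_prop)).div_const _

lemma birkhoffSum_rayAverage (hw : Measurable w) (hh : 0 < h) (n : ℕ) (x : E) :
    birkhoffSum (· + h • v) (rayAverage v w h) n x =
      (∫⁻ t in Ioc 0 (n * h), w (x + t • v)) / ENNReal.ofReal h := by
  have hiter (i : ℕ) : (· + h • v)^[i] x = x + (i * h) • v := by
    simp [mul_smul, Nat.cast_smul_eq_nsmul]
  have hshift (a : ℝ) : ∫⁻ t in Ioc 0 h, w (x + a • v + t • v) =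
      ∫⁻ t in Ioc a (a + h), w (x + t • v) := by
    have hpre : (a + ·) ⁻¹' Ioc a (a + h) = Ioc 0 h := by simp
    rw [← (measurePreserving_add_left volume a).setLIntegral_comp_preimage
      (f := fun t => w (x + t • v)) measurableSet_Ioc (by fun_prop), hpre]
    simp only [add_smul, add_assoc]
  induction n with
  | zero => simp
  | succ n ih =>
    rw [birkhoffSum_succ, ih, hiter, rayAverage, hshift, ← ENNReal.add_div]
    push_cast
    rw [add_mul, one_mul, ← lintegral_union measurableSet_Ioc (Ioc_disjoint_Ioc_of_le le_rfl),
      Ioc_union_Ioc_eq_Ioc (by positivity) (by linarith)]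

lemma birkhoffMaximal_rayAverage (hw : Measurable w) (m : ℕ) :
    birkhoffMaximal (· + ((2 : ℝ) ^ m)⁻¹ • v) (rayAverage v w ((2 : ℝ) ^ m)⁻¹) (4 ^ m) =
      dyadicRayMaximal v w m := by
  funext x
  refine Finset.sup_congr rfl fun n _ => ?_
  rw [birkhoffSum_rayAverage hw (by positivity), rayAverage, ← div_eq_mul_inv, div_eq_mul_inv,
    div_eq_mul_inv, div_eq_mul_inv, mul_assoc, ← ENNReal.mul_inv (by simp) (by simp),
    ← ENNReal.ofReal_natCast, ← ENNReal.ofReal_mul (by positivity), mul_comm ((2 ^ m)⁻¹ : ℝ),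
    ← div_eq_mul_inv]

lemma measurable_dyadicRayMaximal (hw : Measurable w) (v : E) (m : ℕ) :
    Measurable (dyadicRayMaximal v w m) := by
  rw [← birkhoffMaximal_rayAverage hw]
  exact measurable_birkhoffMaximal (measurable_add_const _) (measurable_rayAverage hw v _) _

lemma measurable_rayMaximal (hw : Measurable w) (v : E) : Measurable (rayMaximal v w) :=
  .iSup fun m => measurable_dyadicRayMaximal hw v m

lemma measurable_multiRayMaximal (hw : Measurable w) (V : Finset E) :
    Measurable (multiRayMaximal V w) :=
  Finset.measurable_fun_sum _ fun v _ => measurable_rayMaximal hw v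

variable {μ : Measure E} [SFinite μ] [μ.IsAddRightInvariant]

lemma lintegral_rayAverage_sq_le (hw : Measurable w) (v : E) (hh : 0 < h) :
    ∫⁻ x, rayAverage v w h x ^ 2 ∂μ ≤ ∫⁻ x, w x ^ 2 ∂μ := by
  have hne : ENNReal.ofReal h ≠ 0 := by simpa using hh
  have hjensen (x : E) : rayAverage v w h x ^ 2 ≤
      (∫⁻ t in Ioc 0 h, w (x + t • v) ^ 2) / ENNReal.ofReal h := by
    have hcs := sq_lintegral_mul_le (μ := volume.restrict (Ioc 0 h)) (f := fun _ => 1)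
      (g := fun t => w (x + t • v)) (by fun_prop) (by fun_prop)
    simp only [one_mul, one_pow, setLIntegral_const, Real.volume_Ioc, sub_zero] at hcs
    calc rayAverage v w h x ^ 2
        = (∫⁻ t in Ioc 0 h, w (x + t • v)) ^ 2 / ENNReal.ofReal h / ENNReal.ofReal h := by
          simp only [rayAverage, div_eq_mul_inv]; ring
      _ ≤ (∫⁻ t in Ioc 0 h, w (x + t • v) ^ 2) / ENNReal.ofReal h := by
          gcongr
          exact ENNReal.div_le_of_le_mul' hcs
  calc ∫⁻ x, rayAverage v w h x ^ 2 ∂μ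
      ≤ ∫⁻ x, (∫⁻ t in Ioc 0 h, w (x + t • v) ^ 2) / ENNReal.ofReal h ∂μ :=
        lintegral_mono hjensen
    _ = (∫⁻ t in Ioc 0 h, ∫⁻ x, w (x + t • v) ^ 2 ∂μ) / ENNReal.ofReal h := by
        simp only [div_eq_mul_inv]
        rw [lintegral_mul_const' _ _ (by simpa using hh), lintegral_lintegral_swap]
        exact Measurable.aemeasurable (by fun_prop)
    _ = ∫⁻ x, w x ^ 2 ∂μ := by
        simp only [lintegral_add_right_eq_self (fun x => w x ^ 2), setLIntegral_const,
          Real.volume_Ioc, sub_zero]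
        exact ENNReal.mul_div_cancel_right hne ENNReal.ofReal_ne_top

lemma lintegral_dyadicRayMaximal_sq_le (hw : Measurable w) (v : E) (m : ℕ) :
    ∫⁻ x, dyadicRayMaximal v w m x ^ 2 ∂μ ≤ 4 * ∫⁻ x, w x ^ 2 ∂μ := by
  rw [← birkhoffMaximal_rayAverage hw]
  refine (lintegral_birkhoffMaximal_sq_le (measurePreserving_add_right μ _)
    (measurable_rayAverage hw v _) _).trans ?_
  gcongr 4 * ?_
  exact lintegral_rayAverage_sq_le hw v (by positivity)

lemma lintegral_rayMaximal_sq_le (hw : Measurable w) (v : E) :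
    ∫⁻ x, rayMaximal v w x ^ 2 ∂μ ≤ 4 * ∫⁻ x, w x ^ 2 ∂μ := by
  have hsq (x : E) : rayMaximal v w x ^ 2 = ⨆ m, dyadicRayMaximal v w m x ^ 2 :=
    ENNReal.iSup_pow (fun m => dyadicRayMaximal v w m x) 2
  simp only [hsq]
  rw [lintegral_iSup (fun m => (measurable_dyadicRayMaximal hw v m).pow_const 2)
    fun m n hmn x => pow_le_pow_left' (monotone_dyadicRayMaximal x hmn) 2]
  exact iSup_le fun m => lintegral_dyadicRayMaximal_sq_le hw v m

lemma lintegral_multiRayMaximal_sq_le (hw : Measurable w) (V : Finset E) :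
    ∫⁻ x, multiRayMaximal V w x ^ 2 ∂μ ≤ 4 * V.card ^ 2 * ∫⁻ x, w x ^ 2 ∂μ :=
  calc ∫⁻ x, multiRayMaximal V w x ^ 2 ∂μ
      ≤ ∫⁻ x, V.card * ∑ v ∈ V, rayMaximal v w x ^ 2 ∂μ :=
        lintegral_mono fun x => sq_sum_le_card_mul_sum_sq_ennreal V fun v => rayMaximal v w x
    _ = V.card * ∑ v ∈ V, ∫⁻ x, rayMaximal v w x ^ 2 ∂μ := by
        have hmeas (v : E) : Measurable fun x => rayMaximal v w x ^ 2 :=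
          (measurable_rayMaximal hw v).pow_const 2
        rw [lintegral_const_mul _ (Finset.measurable_fun_sum _ fun v _ => hmeas v),
          lintegral_finsetSum _ fun v _ => hmeas v]
    _ ≤ V.card * ∑ v ∈ V, 4 * ∫⁻ x, w x ^ 2 ∂μ := by
        gcongr with v
        exact lintegral_rayMaximal_sq_le hw v
    _ = 4 * V.card ^ 2 * ∫⁻ x, w x ^ 2 ∂μ := by
        rw [Finset.sum_const, nsmul_eq_mul]
        ring

end RayMaximal

section Interpolation

variable {E G : Type*} [NormedAddCommGroup E] [NormedSpace ℝ E]
  [NormedAddCommGroup G] [NormedSpace ℝ G]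

lemma exists_dual_vandermonde (n : ℕ) : ∃ c : Fin (n + 1) → Fin (n + 1) → ℝ, ∀ i l : Fin (n + 1),
    ∑ j, c i j * ((j : ℝ) / n) ^ (l : ℕ) = if i = l then 1 else 0 := by
  set V := Matrix.vandermonde fun j : Fin (n + 1) => (j : ℝ) / n with hV
  have hnodes : Function.Injective fun j : Fin (n + 1) => (j : ℝ) / n := by
    intro a b hab
    rcases n.eq_zero_or_pos with rfl | hn
    · exact Subsingleton.elim (α := Fin 1) a b
    · exact Fin.ext (by simpa [div_left_inj' (show (n : ℝ) ≠ 0 by positivity)] using hab)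
  have hinv : V⁻¹ * V = 1 :=
    Matrix.nonsing_inv_mul V (isUnit_iff_ne_zero.2 (Matrix.det_vandermonde_ne_zero_iff.2 hnodes))
  refine ⟨fun i j => V⁻¹ i j, fun i l => ?_⟩
  simpa [hV, Matrix.vandermonde_apply, Matrix.mul_apply, Matrix.one_apply] using
    congrFun (congrFun hinv i) l

variable (G) in
lemma exists_norm_coeff_le_of_norm_sum_pow_smul_le (n : ℕ) :
    ∃ C : ℝ, 0 ≤ C ∧ ∀ (a : ℕ → G) (B : ℝ),
      (∀ s ∈ Icc (0 : ℝ) 1, ‖∑ i ∈ Finset.range (n + 1), s ^ i • a i‖ ≤ B) →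
      ∀ i ≤ n, ‖a i‖ ≤ C * B := by
  obtain ⟨c, hc⟩ := exists_dual_vandermonde n
  refine ⟨∑ i, ∑ j, |c i j|, by positivity, fun a B hB i hi => ?_⟩
  have hnode (j : Fin (n + 1)) : (j : ℝ) / n ∈ Icc (0 : ℝ) 1 :=
    ⟨by positivity, div_le_one_of_le₀ (mod_cast Nat.lt_succ_iff.1 j.2) (by positivity)⟩
  have hB₀ : 0 ≤ B := (norm_nonneg _).trans (hB 0 ⟨le_rfl, zero_le_one⟩)
  lift i to Fin (n + 1) using Nat.lt_succ_of_le hi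
  have hrecover : a i = ∑ j, c i j • ∑ l ∈ Finset.range (n + 1), ((j : ℝ) / n) ^ l • a l := by
    simp_rw [Finset.sum_range, Finset.smul_sum, smul_smul]
    rw [Finset.sum_comm]
    simp_rw [← Finset.sum_smul, hc]
    simp
  calc ‖a i‖ ≤ ∑ j, |c i j| * B := by
        rw [hrecover]
        refine norm_sum_le_of_le _ fun j _ => ?_
        rw [norm_smul, Real.norm_eq_abs]
        gcongr
        exact hB _ (hnode j)
    _ ≤ (∑ i, ∑ j, |c i j|) * B := by
        rw [← Finset.sum_mul]
        gcongr ?_ * B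
        exact Finset.single_le_sum (f := fun i => ∑ j, |c i j|) (fun i _ => by positivity)
          (Finset.mem_univ i)

variable {U : E → G} {x y : E} {n : ℕ}

lemma continuousOn_iteratedFDeriv_ray
    (hU : ∀ t ∈ Icc (0 : ℝ) 1, ContDiffAt ℝ n U (x + t • y)) :
    ContinuousOn (fun t : ℝ => iteratedFDeriv ℝ n U (x + t • y) fun _ => y) (Icc 0 1) :=
  fun t ht => (((hU t ht).continuousAt_iteratedFDeriv le_rfl).comp (x := t)
    (f := fun t : ℝ => x + t • y) (by fun_prop)).continuousWithinAt.eval_const _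

lemma mul_integral_comp_mul_left_le {φ : ℝ → ℝ} (hφ : ContinuousOn φ (Icc 0 1))
    (hφ₀ : ∀ t, 0 ≤ φ t) {s : ℝ} (hs : s ∈ Icc 0 1) :
    s * ∫ t in (0 : ℝ)..1, φ (s * t) ≤ ∫ t in (0 : ℝ)..1, φ t := by
  rw [← smul_eq_mul, intervalIntegral.smul_integral_comp_mul_left, mul_zero, mul_one]
  exact intervalIntegral.integral_mono_interval le_rfl hs.1 hs.2 (.of_forall hφ₀)
    (hφ.intervalIntegrable_of_Icc zero_le_one)

variable [CompleteSpace G]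

lemma norm_sub_taylor_le_integral
    (hU : ∀ t ∈ Icc (0 : ℝ) 1, ContDiffAt ℝ (n + 1) U (x + t • y)) {s : ℝ} (hs : s ∈ Icc 0 1) :
    ‖U (x + s • y) -
        ∑ i ∈ Finset.range (n + 1), s ^ i • (i.factorial : ℝ)⁻¹ • iteratedFDeriv ℝ i U x fun _ => y‖
      ≤ ∫ t in (0 : ℝ)..1, ‖iteratedFDeriv ℝ (n + 1) U (x + t • y) fun _ => y‖ := by
  set D : ℝ → G := fun t => iteratedFDeriv ℝ (n + 1) U (x + t • y) fun _ => y
  have hD : ContinuousOn D (Icc 0 1) := continuousOn_iteratedFDeriv_ray hU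
  have hmem {t : ℝ} (ht : t ∈ Icc (0 : ℝ) 1) : s * t ∈ Icc (0 : ℝ) 1 :=
    ⟨mul_nonneg hs.1 ht.1, mul_le_one₀ hs.2 ht.1 ht.2⟩
  have hD_scaled : ContinuousOn (fun t => D (s * t)) (Icc 0 1) :=
    hD.comp (by fun_prop) fun t ht => hmem ht
  have hhom (i : ℕ) (z : E) : (iteratedFDeriv ℝ i U z fun _ => s • y) =
      s ^ i • iteratedFDeriv ℝ i U z fun _ => y := by
    simpa using (iteratedFDeriv ℝ i U z).map_smul_univ (fun _ => s) fun _ => y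
  have htaylor : U (x + s • y) = ∑ i ∈ Finset.range (n + 1),
      s ^ i • (i.factorial : ℝ)⁻¹ • (iteratedFDeriv ℝ i U x fun _ => y) +
        (n.factorial : ℝ)⁻¹ • ∫ t in (0 : ℝ)..1, (1 - t) ^ n • s ^ (n + 1) • D (s * t) := by
    rw [map_add_eq_sum_add_integral_iteratedFDeriv (n := n) (f := U) (x := x) (y := s • y)
      fun t ht => by simpa [smul_smul, mul_comm] using hU (s * t) (hmem ht)]
    simp only [hhom, smul_comm (s ^ _) (_ : ℝ)⁻¹, smul_smul _ s y, mul_comm _ s, D]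
  have hfact : (n.factorial : ℝ)⁻¹ ≤ 1 := inv_le_one_of_one_le₀ (mod_cast n.factorial_pos)
  rw [htaylor, add_sub_cancel_left, norm_smul, norm_inv, RCLike.norm_natCast]
  refine (mul_le_of_le_one_left (norm_nonneg _) hfact).trans ?_
  calc ‖∫ t in (0 : ℝ)..1, (1 - t) ^ n • s ^ (n + 1) • D (s * t)‖
      ≤ ∫ t in (0 : ℝ)..1, s * ‖D (s * t)‖ := by
        refine intervalIntegral.norm_integral_le_of_norm_le zero_le_one (.of_forall fun t ht => ?_)
          ((continuousOn_const.mul hD_scaled.norm).intervalIntegrable_of_Icc zero_le_one)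
        rw [smul_smul, norm_smul]
        gcongr
        rw [norm_mul, norm_pow, norm_pow, norm_of_nonneg hs.1,
          norm_of_nonneg (sub_nonneg.2 ht.2)]
        exact (mul_le_of_le_one_left (pow_nonneg hs.1 _)
          (pow_le_one₀ (sub_nonneg.2 ht.2) (by linarith [ht.1]))).trans
          (pow_le_of_le_one hs.1 hs.2 n.succ_ne_zero)
    _ ≤ ∫ t in (0 : ℝ)..1, ‖D t‖ := by
        rw [intervalIntegral.integral_const_mul]
        exact mul_integral_comp_mul_left_le hD.norm (fun t => norm_nonneg _) hs

variable (E G) in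
lemma exists_norm_iteratedFDeriv_apply_le (n : ℕ) :
    ∃ C : ℝ, 0 ≤ C ∧ ∀ (U : E → G) (x y : E) (A : ℝ),
      (∀ t ∈ Icc (0 : ℝ) 1, ContDiffAt ℝ (n + 1) U (x + t • y)) →
      (∀ t ∈ Icc (0 : ℝ) 1, ‖U (x + t • y)‖ ≤ A) →
      ∀ i ≤ n, ‖iteratedFDeriv ℝ i U x fun _ => y‖ ≤
        C * (A + ∫ t in (0 : ℝ)..1, ‖iteratedFDeriv ℝ (n + 1) U (x + t • y) fun _ => y‖) := by
  obtain ⟨C, hC, hcoeff⟩ := exists_norm_coeff_le_of_norm_sum_pow_smul_le G n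
  refine ⟨n.factorial * C, by positivity, fun U x y A hU hA i hi => ?_⟩
  set I := ∫ t in (0 : ℝ)..1, ‖iteratedFDeriv ℝ (n + 1) U (x + t • y) fun _ => y‖
  have htaylor := hcoeff (fun i => (i.factorial : ℝ)⁻¹ • iteratedFDeriv ℝ i U x fun _ => y) (A + I)
    (fun s hs => (norm_le_norm_add_norm_sub _ _).trans <|
      add_le_add (hA s hs) (norm_sub_taylor_le_integral hU hs)) i hi
  rw [norm_smul, norm_inv, RCLike.norm_natCast, inv_mul_le_iff₀ (by positivity)] at htaylor
  calc ‖iteratedFDeriv ℝ i U x fun _ => y‖ ≤ i.factorial * (C * (A + I)) := htaylor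
    _ ≤ n.factorial * C * (A + I) := by
        have hA₀ : 0 ≤ A := (norm_nonneg _).trans (hA 0 ⟨le_rfl, zero_le_one⟩)
        have hI₀ : 0 ≤ I := intervalIntegral.integral_nonneg zero_le_one fun t _ => norm_nonneg _
        rw [mul_assoc]
        gcongr

end Interpolation

section Polarization

variable {E G : Type*} [NormedAddCommGroup E] [NormedSpace ℝ E]
  [NormedAddCommGroup G] [NormedSpace ℝ G]

lemma iteratedFDeriv_add_two_apply (n : ℕ) (f : E → G) (x : E) (v : Fin (n + 2) → E) :
    iteratedFDeriv ℝ (n + 2) f x v =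
      fderiv ℝ (fderiv ℝ (iteratedFDeriv ℝ n f)) x (v 0) (v 1) (Fin.tail (Fin.tail v)) := by
  rw [iteratedFDeriv_succ_apply_left, iteratedFDeriv_succ_eq_comp_left]
  exact congrArg (fun T => T (v 0) (Fin.tail v)) <| LinearIsometryEquiv.comp_fderiv
    (𝕜 := ℝ) (E := E →L[ℝ] E [×n]→L[ℝ] G) (F := E [×(n + 1)]→L[ℝ] G) (x := x)
    (iso := (continuousMultilinearCurryLeftEquiv ℝ (fun _ : Fin (n + 1) => E) G).symm)
    (f := fderiv ℝ (iteratedFDeriv ℝ n f))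

lemma iteratedFDeriv_comp_swap_zero_one {n : ℕ} {f : E → G} {x : E}
    (hf : ContDiffAt ℝ (n + 2 : ℕ) f x) (v : Fin (n + 2) → E) :
    iteratedFDeriv ℝ (n + 2) f x (v ∘ Equiv.swap 0 1) = iteratedFDeriv ℝ (n + 2) f x v := by
  have hsymm : IsSymmSndFDerivAt ℝ (iteratedFDeriv ℝ n f) x :=
    (hf.iteratedFDeriv_right (m := 2) (by rw [add_comm]; norm_cast)).isSymmSndFDerivAt (by simp)
  have htail : Fin.tail (Fin.tail (v ∘ Equiv.swap 0 1)) = Fin.tail (Fin.tail v) := by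
    funext j
    simp only [Fin.tail, Function.comp]
    rw [Equiv.swap_apply_of_ne_of_ne (Fin.succ_ne_zero _) (by simp [Fin.ext_iff])]
  rw [iteratedFDeriv_add_two_apply, iteratedFDeriv_add_two_apply, htail, hsymm.eq]
  simp

lemma iteratedFDeriv_comp_swap_castSucc_succ {n : ℕ} {f : E → G} {x : E}
    (hf : ContDiffAt ℝ (n + 1 : ℕ) f x) (i : Fin n) (v : Fin (n + 1) → E) :
    iteratedFDeriv ℝ (n + 1) f x (v ∘ Equiv.swap i.castSucc i.succ) =
      iteratedFDeriv ℝ (n + 1) f x v := by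
  induction n generalizing x with
  | zero => exact i.elim0
  | succ n ih =>
    refine Fin.cases (iteratedFDeriv_comp_swap_zero_one hf v) (fun i => ?_) i
    have hdiff : DifferentiableAt ℝ (iteratedFDeriv ℝ (n + 1) f) x :=
      hf.differentiableAt_iteratedFDeriv (mod_cast Nat.lt_succ_self _)
    have hhead : (v ∘ Equiv.swap (Fin.castSucc i.succ) i.succ.succ) 0 = v 0 := by
      rw [Function.comp_apply, Equiv.swap_apply_of_ne_of_ne] <;> simp [Fin.ext_iff]
    have htail : Fin.tail (v ∘ Equiv.swap (Fin.castSucc i.succ) i.succ.succ) =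
        Fin.tail v ∘ Equiv.swap i.castSucc i.succ := by
      funext j
      simp only [Fin.tail, Function.comp, ← Fin.succ_castSucc]
      rw [(Fin.succ_injective _).swap_apply]
    have hev : ∀ᶠ y in 𝓝 x, ContDiffAt ℝ (n + 1 : ℕ) f y :=
      (hf.of_le (mod_cast Nat.le_succ _)).eventually (by simp)
    rw [hdiff.iteratedFDeriv_succ_apply_left', hdiff.iteratedFDeriv_succ_apply_left', hhead, htail,
      EventuallyEq.fderiv_eq (hev.mono fun y hy => ih hy i _)]

lemma iteratedFDeriv_comp_perm {n : ℕ} {f : E → G} {x : E} (hf : ContDiffAt ℝ n f x)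
    (σ : Equiv.Perm (Fin n)) (v : Fin n → E) :
    iteratedFDeriv ℝ n f x (v ∘ σ) = iteratedFDeriv ℝ n f x v := by
  cases n with
  | zero => congr 1; exact Subsingleton.elim _ _
  | succ n =>
    have hσ : σ ∈ Submonoid.closure (range fun i : Fin n => Equiv.swap i.castSucc i.succ) := by
      rw [Equiv.Perm.mclosure_swap_castSucc_succ]; trivial
    induction hσ using Submonoid.closure_induction generalizing v with
    | mem s hs => obtain ⟨i, rfl⟩ := hs; exact iteratedFDeriv_comp_swap_castSucc_succ hf i v
    | one => rfl
    | mul a b _ _ ha hb => rw [Equiv.Perm.coe_mul, ← Function.comp_assoc, hb, ha]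

variable {n : ℕ} {S : Set E}

-- The `n`-th derivative of `x ↦ T (x, …, x)` is `n! • T`.
lemma eq_zero_of_diagonal_eq_zero (hS : (interior S).Nonempty) {T : E [×n]→L[ℝ] G}
    (hT : ∀ (σ : Equiv.Perm (Fin n)) v, T (v ∘ σ) = T v) (hzero : ∀ v ∈ S, T (fun _ => v) = 0) :
    T = 0 := by
  obtain ⟨x, hx⟩ := hS
  have hloc : (fun y => T fun _ => y) =ᶠ[𝓝 x] fun _ => 0 :=
    eventually_of_mem (mem_interior_iff_mem_nhds.1 hx) hzero
  ext v
  have hfact : (n.factorial : ℝ) • T v = 0 := by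
    have hderiv := T.iteratedFDeriv_comp_diagonal x v
    rw [hloc.iteratedFDeriv ℝ n |>.eq_of_nhds] at hderiv
    simpa [show ∀ σ : Equiv.Perm (Fin n), T (fun i => v (σ i)) = T v from fun σ => hT σ v,
      Fintype.card_perm, Nat.cast_smul_eq_nsmul] using hderiv.symm
  simpa [n.factorial_ne_zero] using hfact

variable [FiniteDimensional ℝ E]

instance finiteDimensional_continuousMultilinearMap [FiniteDimensional ℝ G] :
    FiniteDimensional ℝ (E [×n]→L[ℝ] G) :=
  FiniteDimensional.of_injective ContinuousMultilinearMap.toMultilinearMapLinear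
    ContinuousMultilinearMap.toMultilinearMap_injective

lemma isCompact_symmetric_unit_sphere :
    IsCompact {T : E [×n]→L[ℝ] ℝ | ‖T‖ = 1 ∧ ∀ (σ : Equiv.Perm (Fin n)) v, T (v ∘ σ) = T v} := by
  have hsphere : IsCompact (Metric.sphere (0 : E [×n]→L[ℝ] ℝ) 1) :=
    have := FiniteDimensional.proper_real (E [×n]→L[ℝ] ℝ)
    isCompact_sphere _ _
  have hclosed : IsClosed {T : E [×n]→L[ℝ] ℝ | ∀ (σ : Equiv.Perm (Fin n)) v, T (v ∘ σ) = T v} := by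
    simp only [ofPred_forall]
    exact isClosed_iInter fun σ => isClosed_iInter fun v => isClosed_eq (by fun_prop) (by fun_prop)
  convert hsphere.inter_right hclosed using 1
  ext T
  simp

lemma exists_finset_norm_le_sum_diagonal_real (hS : (interior S).Nonempty) (n : ℕ) :
    ∃ V : Finset E, ↑V ⊆ S ∧ ∃ C : ℝ, 0 ≤ C ∧ ∀ T : E [×n]→L[ℝ] ℝ,
      (∀ (σ : Equiv.Perm (Fin n)) v, T (v ∘ σ) = T v) → ‖T‖ ≤ C * ∑ v ∈ V, ‖T fun _ => v‖ := by
  set K := {T : E [×n]→L[ℝ] ℝ | ‖T‖ = 1 ∧ ∀ (σ : Equiv.Perm (Fin n)) v, T (v ∘ σ) = T v}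
  have hK : IsCompact K := isCompact_symmetric_unit_sphere
  have hcover : K ⊆ ⋃ v : S, {T | T (fun _ => (v : E)) ≠ 0} := fun T hT => by
    by_contra hnot
    simp only [mem_iUnion, not_exists] at hnot
    have hT₀ : T = 0 := eq_zero_of_diagonal_eq_zero hS hT.2 fun v hv => by
      simpa using hnot ⟨v, hv⟩
    simpa [hT₀] using hT.1
  obtain ⟨W, hW⟩ := hK.elim_finite_subcover _
    (fun v : S => isOpen_ne_fun (by fun_prop) continuous_const) hcover
  have hpos : ∀ T ∈ K, 0 < ∑ v ∈ W, ‖T fun _ => (v : E)‖ := fun T hT => by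
    obtain ⟨v, hv, hTv⟩ := mem_iUnion₂.1 (hW hT)
    exact (norm_pos_iff.2 hTv).trans_le <|
      Finset.single_le_sum (f := fun v : S => ‖T fun _ => (v : E)‖) (fun _ _ => norm_nonneg _) hv
  obtain ⟨c, hc, hlower⟩ : ∃ c > 0, ∀ T ∈ K, c ≤ ∑ v ∈ W, ‖T fun _ => (v : E)‖ :=
    hK.exists_forall_le' (continuous_finsetSum _ fun v _ => by fun_prop).continuousOn hpos
  refine ⟨W.map (.subtype _), by simp, c⁻¹, by positivity, fun T hT => ?_⟩
  rcases eq_or_ne T 0 with rfl | hT₀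
  · simp
  have hunit := hlower (‖T‖⁻¹ • T) ⟨norm_smul_inv_norm hT₀, fun σ v => by simp [hT σ v]⟩
  rw [le_inv_mul_iff₀ hc]
  simpa [norm_smul, ← Finset.mul_sum, le_inv_mul_iff₀ (norm_pos_iff.2 hT₀), mul_comm] using hunit

variable (G) in
lemma exists_finset_norm_le_sum_diagonal (hS : (interior S).Nonempty) (k : ℕ) :
    ∃ V : Finset E, ↑V ⊆ S ∧ ∃ C : ℝ, 0 ≤ C ∧ ∀ n ≤ k, ∀ T : E [×n]→L[ℝ] G,
      (∀ (σ : Equiv.Perm (Fin n)) v, T (v ∘ σ) = T v) → ‖T‖ ≤ C * ∑ v ∈ V, ‖T fun _ => v‖ := by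
  classical
  choose V hVS C hC hreal using fun n => exists_finset_norm_le_sum_diagonal_real hS n
  have hCsum : 0 ≤ ∑ n ∈ Finset.range (k + 1), C n := Finset.sum_nonneg fun n _ => hC n
  refine ⟨(Finset.range (k + 1)).biUnion V, by simpa using fun n _ => hVS n,
    ∑ n ∈ Finset.range (k + 1), C n, hCsum, fun n hn T hT => ?_⟩
  have hn' : n ∈ Finset.range (k + 1) := Finset.mem_range_succ_iff.2 hn
  refine T.opNorm_le_bound (by positivity) fun m => ?_
  obtain ⟨φ, hφ, hφm⟩ := exists_dual_vector'' ℝ (T m)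
  calc ‖T m‖ = ‖φ.compContinuousMultilinearMap T m‖ := by simp [hφm]
    _ ≤ (C n * ∑ v ∈ V n, ‖φ (T fun _ => v)‖) * ∏ i, ‖m i‖ :=
        (φ.compContinuousMultilinearMap T).le_of_opNorm_le
          (hreal n _ fun σ v => by simp [hT σ v]) m
    _ ≤ (C n * ∑ v ∈ V n, ‖T fun _ => v‖) * ∏ i, ‖m i‖ := by
        have := hC n
        gcongr with v
        simpa using φ.le_of_opNorm_le hφ (T fun _ => v)
    _ ≤ _ := by
        gcongr
        · exact Finset.single_le_sum (fun n _ => hC n) hn'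
        · exact Finset.subset_biUnion_of_mem V hn'

end Polarization

section PointwiseInterpolation

variable {E G : Type*} [NormedAddCommGroup E] [NormedSpace ℝ E]
  [NormedAddCommGroup G] {O : Set E} {x v : E} {h : ℝ}

lemma integral_norm_ray_le_rayMaximal (F : E → G) (hray : ∀ t : ℝ, 0 ≤ t → x + t • v ∈ O)
    (hh : 0 < h) (hfin : rayMaximal v (O.indicator fun y => ‖F y‖ₑ) x ≠ ∞) :
    ∫ t in (0 : ℝ)..1, ‖F (x + t • h • v)‖ ≤
      2 * (rayMaximal v (O.indicator fun y => ‖F y‖ₑ) x).toReal := by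
  set m := rayMaximal v (O.indicator fun y => ‖F y‖ₑ) x
  have hmax : ∫⁻ t in Ioc 0 h, ‖F (x + t • v)‖ₑ ≤ ENNReal.ofReal (2 * h) * m := by
    refine (setLIntegral_congr_fun measurableSet_Ioc fun t ht => ?_).trans_le
      (setLIntegral_ray_le_rayMaximal hh x)
    rw [indicator_of_mem (hray t ht.1.le)]
  have hint : ∫ t in (0 : ℝ)..h, ‖F (x + t • v)‖ ≤ 2 * h * m.toReal :=
    calc ∫ t in (0 : ℝ)..h, ‖F (x + t • v)‖
        ≤ (∫⁻ t in Ioc 0 h, ‖F (x + t • v)‖ₑ).toReal := by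
          rw [intervalIntegral.integral_of_le hh.le]
          simpa using (le_abs_self _).trans
            (norm_integral_le_lintegral_norm (μ := volume.restrict (Ioc 0 h))
              fun t => ‖F (x + t • v)‖)
      _ ≤ (ENNReal.ofReal (2 * h) * m).toReal := ENNReal.toReal_mono (by finiteness) hmax
      _ = 2 * h * m.toReal := by rw [ENNReal.toReal_mul, ENNReal.toReal_ofReal (by positivity)]
  simp only [smul_smul]
  rw [intervalIntegral.integral_comp_mul_right (fun t => ‖F (x + t • v)‖) hh.ne', zero_mul, one_mul,
    smul_eq_mul, inv_mul_le_iff₀ hh]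
  linarith

variable [NormedSpace ℝ G] {k : ℕ} {U : E → G}

lemma continuousOn_iteratedFDeriv (hO : IsOpen O) (hU : ContDiffOn ℝ k U O) :
    ContinuousOn (iteratedFDeriv ℝ k U) O :=
  (hU.continuousOn_iteratedFDerivWithin le_rfl hO.uniqueDiffOn).congr fun _ hx =>
    (iteratedFDerivWithin_of_isOpen k hO hx).symm

lemma integral_norm_iteratedFDeriv_ray_le_rayMaximal (hO : IsOpen O) (hU : ContDiffOn ℝ k U O)
    (hray : ∀ t : ℝ, 0 ≤ t → x + t • v ∈ O) (hh : 0 < h)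
    (hfin : rayMaximal v (O.indicator fun y => ‖iteratedFDeriv ℝ k U y‖ₑ) x ≠ ∞) :
    ∫ t in (0 : ℝ)..1, ‖iteratedFDeriv ℝ k U (x + t • h • v) fun _ => h • v‖ ≤
      2 * (h * ‖v‖) ^ k *
        (rayMaximal v (O.indicator fun y => ‖iteratedFDeriv ℝ k U y‖ₑ) x).toReal := by
  have hmem {t : ℝ} (ht : 0 ≤ t) : x + t • h • v ∈ O := by
    rw [smul_smul]
    exact hray _ (by positivity)
  have hcont : ContinuousOn (fun t : ℝ => iteratedFDeriv ℝ k U (x + t • h • v)) (Icc 0 1) :=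
    (continuousOn_iteratedFDeriv hO hU).comp (by fun_prop) fun t ht => hmem ht.1
  calc ∫ t in (0 : ℝ)..1, ‖iteratedFDeriv ℝ k U (x + t • h • v) fun _ => h • v‖
      ≤ ∫ t in (0 : ℝ)..1, (h * ‖v‖) ^ k * ‖iteratedFDeriv ℝ k U (x + t • h • v)‖ := by
        refine intervalIntegral.integral_mono_on zero_le_one
          ((hcont.eval_const _).norm.intervalIntegrable_of_Icc zero_le_one)
          ((continuousOn_const.mul hcont.norm).intervalIntegrable_of_Icc zero_le_one) fun t _ => ?_
        simpa [norm_smul, abs_of_pos hh, mul_comm] using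
          (iteratedFDeriv ℝ k U (x + t • h • v)).le_opNorm fun _ => h • v
    _ = (h * ‖v‖) ^ k * ∫ t in (0 : ℝ)..1, ‖iteratedFDeriv ℝ k U (x + t • h • v)‖ :=
        intervalIntegral.integral_const_mul _ _
    _ ≤ (h * ‖v‖) ^ k *
        (2 * (rayMaximal v (O.indicator fun y => ‖iteratedFDeriv ℝ k U y‖ₑ) x).toReal) := by
        gcongr
        exact integral_norm_ray_le_rayMaximal _ hray hh hfin
    _ = _ := by ring

/-- The directions in which every ray starting in `O` stays in `O`. -/
def recessionCone (O : Set E) : Set E := {v | ∀ x ∈ O, ∀ t : ℝ, 0 ≤ t → x + t • v ∈ O}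

lemma zero_mem_recessionCone (O : Set E) : (0 : E) ∈ recessionCone O := by
  simp +contextual [recessionCone]

/-- The maximal function of `‖∇ᵏU‖` over rays with directions in `V`, where `‖∇ᵏU‖` is replaced
by `0` outside `O`. -/
def derivMaximal (V : Finset E) (O : Set E) (k : ℕ) (U : E → G) : E → ℝ≥0∞ :=
  multiRayMaximal V (O.indicator fun y => ‖iteratedFDeriv ℝ k U y‖ₑ)

lemma norm_iteratedFDeriv_le_derivMaximal {V : Finset E} (hV : 0 ∈ V) (hx : x ∈ O)
    (hfin : derivMaximal V O k U x ≠ ∞) :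
    ‖iteratedFDeriv ℝ k U x‖ ≤ (derivMaximal V O k U x).toReal := by
  rw [← toReal_enorm]
  refine ENNReal.toReal_mono hfin ?_
  calc ‖iteratedFDeriv ℝ k U x‖ₑ = O.indicator (fun y => ‖iteratedFDeriv ℝ k U y‖ₑ) x :=
        (indicator_of_mem hx (f := fun y => ‖iteratedFDeriv ℝ k U y‖ₑ)).symm
    _ ≤ rayMaximal 0 (O.indicator fun y => ‖iteratedFDeriv ℝ k U y‖ₑ) x := le_rayMaximal_zero _ x
    _ ≤ derivMaximal V O k U x := rayMaximal_le_multiRayMaximal hV x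

variable [CompleteSpace G]

variable (G) in
lemma exists_pow_mul_norm_iteratedFDeriv_apply_le_rayMaximal (v : E) (n : ℕ) :
    ∃ C : ℝ, 0 ≤ C ∧ ∀ (O : Set E) (U : E → G) (x : E) (A : ℝ), IsOpen O →
      ContDiffOn ℝ (n + 1 : ℕ) U O → (∀ y ∈ O, ‖U y‖ ≤ A) → (∀ t : ℝ, 0 ≤ t → x + t • v ∈ O) →
      rayMaximal v (O.indicator fun y => ‖iteratedFDeriv ℝ (n + 1) U y‖ₑ) x ≠ ∞ →
      ∀ h : ℝ, 0 < h → ∀ i ≤ n, h ^ i * ‖iteratedFDeriv ℝ i U x fun _ => v‖ ≤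
        C * (A + h ^ (n + 1) *
          (rayMaximal v (O.indicator fun y => ‖iteratedFDeriv ℝ (n + 1) U y‖ₑ) x).toReal) := by
  obtain ⟨C, hC, hbound⟩ := exists_norm_iteratedFDeriv_apply_le E G n
  refine ⟨C * (1 + 2 * ‖v‖ ^ (n + 1)), by positivity,
    fun O U x A hO hU hA hray hfin h hh i hi => ?_⟩
  set m := (rayMaximal v (O.indicator fun y => ‖iteratedFDeriv ℝ (n + 1) U y‖ₑ) x).toReal
  have hA₀ : 0 ≤ A := (norm_nonneg _).trans (hA _ (hray 0 le_rfl))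
  have hmem (t : ℝ) (ht : t ∈ Icc (0 : ℝ) 1) : x + t • h • v ∈ O := by
    rw [smul_smul]
    exact hray _ (mul_nonneg ht.1 hh.le)
  calc h ^ i * ‖iteratedFDeriv ℝ i U x fun _ => v‖
      = ‖iteratedFDeriv ℝ i U x fun _ => h • v‖ := by
        rw [(iteratedFDeriv ℝ i U x).map_smul_univ (fun _ => h) fun _ => v, norm_smul]
        simp [abs_of_pos hh]
    _ ≤ C * (A + ∫ t in (0 : ℝ)..1,
          ‖iteratedFDeriv ℝ (n + 1) U (x + t • h • v) fun _ => h • v‖) :=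
        hbound U x (h • v) A
          (fun t ht => mod_cast hU.contDiffAt (hO.mem_nhds (hmem t ht)))
          (fun t ht => hA _ (hmem t ht)) i hi
    _ ≤ C * (A + 2 * (h * ‖v‖) ^ (n + 1) * m) := by
        gcongr
        exact integral_norm_iteratedFDeriv_ray_le_rayMaximal hO hU hray hh hfin
    _ = C * (A + 2 * ‖v‖ ^ (n + 1) * (h ^ (n + 1) * m)) := by ring
    _ ≤ C * ((1 + 2 * ‖v‖ ^ (n + 1)) * (A + h ^ (n + 1) * m)) := by
        gcongr
        have : 0 ≤ 2 * ‖v‖ ^ (n + 1) * A := by positivity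
        have : 0 ≤ h ^ (n + 1) * m := by positivity
        linarith
    _ = _ := by ring

variable (G) in
lemma exists_pow_mul_norm_diagonal_le_derivMaximal (hO : IsOpen O) {V : Finset E}
    (hV : ↑V ⊆ recessionCone O) (k : ℕ) :
    ∃ C : ℝ, 0 ≤ C ∧ ∀ (U : E → G) (A : ℝ), ContDiffOn ℝ k U O → (∀ y ∈ O, ‖U y‖ ≤ A) →
      ∀ x ∈ O, derivMaximal V O k U x ≠ ∞ → ∀ h : ℝ, 0 < h → ∀ i < k,
        ∑ v ∈ V, h ^ i * ‖iteratedFDeriv ℝ i U x fun _ => v‖ ≤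
          C * (A + h ^ k * (derivMaximal V O k U x).toReal) := by
  cases k with
  | zero => exact ⟨0, le_rfl, by simp⟩
  | succ n =>
    choose C hC hray using
      fun v : E => exists_pow_mul_norm_iteratedFDeriv_apply_le_rayMaximal G v n
    refine ⟨∑ v ∈ V, C v, Finset.sum_nonneg fun v _ => hC v,
      fun U A hU hA x hx hfin h hh i hi => ?_⟩
    rw [Finset.sum_mul]
    refine Finset.sum_le_sum fun v hv => ?_
    have hle := rayMaximal_le_multiRayMaximal (v := v)
      (w := O.indicator fun y => ‖iteratedFDeriv ℝ (n + 1) U y‖ₑ) hv x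
    refine (hray v O U x A hO hU hA (hV hv x hx) (ne_top_of_le_ne_top hfin hle) h hh i
      (Nat.lt_succ_iff.1 hi)).trans ?_
    have := hC v
    gcongr
    exact hle

variable [FiniteDimensional ℝ E]

variable (G) in
lemma exists_finset_pow_mul_norm_iteratedFDeriv_le_derivMaximal (hO : IsOpen O)
    (hcone : (interior (recessionCone O)).Nonempty) (k : ℕ) :
    ∃ V : Finset E, 0 ∈ V ∧ ∃ C : ℝ, 0 ≤ C ∧ ∀ (U : E → G) (A : ℝ), ContDiffOn ℝ k U O →
      (∀ y ∈ O, ‖U y‖ ≤ A) → ∀ x ∈ O, derivMaximal V O k U x ≠ ∞ → ∀ h : ℝ, 0 < h → ∀ i ≤ k,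
        h ^ i * ‖iteratedFDeriv ℝ i U x‖ ≤ C * (A + h ^ k * (derivMaximal V O k U x).toReal) := by
  classical
  obtain ⟨W, hW, C₁, hC₁, hpolar⟩ := exists_finset_norm_le_sum_diagonal G hcone k
  have hV : ↑(insert 0 W) ⊆ recessionCone O := by
    simpa using insert_subset (zero_mem_recessionCone O) hW
  obtain ⟨C₂, _, hdiag⟩ := exists_pow_mul_norm_diagonal_le_derivMaximal G hO hV k
  refine ⟨insert 0 W, Finset.mem_insert_self 0 W, max 1 (C₁ * C₂), by positivity,
    fun U A hU hA x hx hfin h hh i hi => ?_⟩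
  set m := (derivMaximal (insert 0 W) O k U x).toReal
  have hm : 0 ≤ m := ENNReal.toReal_nonneg
  have hA₀ : 0 ≤ A := (norm_nonneg _).trans (hA x hx)
  rcases hi.eq_or_lt with rfl | hlt
  · calc h ^ i * ‖iteratedFDeriv ℝ i U x‖ ≤ h ^ i * m := by
          gcongr
          exact norm_iteratedFDeriv_le_derivMaximal (Finset.mem_insert_self 0 W) hx hfin
      _ ≤ 1 * (A + h ^ i * m) := by linarith
      _ ≤ _ := by gcongr; exact le_max_left _ _
  · have hsymm := iteratedFDeriv_comp_perm
      ((hU.contDiffAt (hO.mem_nhds hx)).of_le (Nat.cast_le.2 hi))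
    calc h ^ i * ‖iteratedFDeriv ℝ i U x‖
        ≤ h ^ i * (C₁ * ∑ v ∈ insert 0 W, ‖iteratedFDeriv ℝ i U x fun _ => v‖) := by
          gcongr
          refine (hpolar i hi _ hsymm).trans ?_
          gcongr
          exact Finset.subset_insert 0 W
      _ = C₁ * ∑ v ∈ insert 0 W, h ^ i * ‖iteratedFDeriv ℝ i U x fun _ => v‖ := by
          rw [← Finset.mul_sum]
          ring
      _ ≤ C₁ * (C₂ * (A + h ^ k * m)) := by
          gcongr
          exact hdiag U A hU hA x hx hfin h hh i hlt
      _ ≤ _ := by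
          rw [← mul_assoc]
          gcongr
          exact le_max_right _ _

end PointwiseInterpolation

section MaximalMajorant

variable {E G : Type*} [NormedAddCommGroup E] [NormedSpace ℝ E] [MeasurableSpace E] [BorelSpace E]
  [NormedAddCommGroup G] [NormedSpace ℝ G] {O : Set E} {k : ℕ} {U : E → G}

lemma measurable_indicator_enorm_iteratedFDeriv (hO : IsOpen O) (hU : ContDiffOn ℝ k U O) :
    Measurable (O.indicator fun y => ‖iteratedFDeriv ℝ k U y‖ₑ) := by
  classical
  rw [← piecewise_eq_indicator]
  exact (continuousOn_iteratedFDeriv hO hU).enorm.measurable_piecewise continuousOn_const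
    hO.measurableSet

variable [FiniteDimensional ℝ E] {μ : Measure E} [SFinite μ] [μ.IsAddRightInvariant]

lemma lintegral_derivMaximal_sq_le (hO : IsOpen O) (hU : ContDiffOn ℝ k U O) (V : Finset E) :
    ∫⁻ x, derivMaximal V O k U x ^ 2 ∂μ ≤
      4 * V.card ^ 2 * ∫⁻ x in O, ‖iteratedFDeriv ℝ k U x‖ₑ ^ 2 ∂μ := by
  refine (lintegral_multiRayMaximal_sq_le
    (measurable_indicator_enorm_iteratedFDeriv hO hU) V).trans_eq ?_
  rw [← lintegral_indicator hO.measurableSet]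
  congr 2 with x
  by_cases hx : x ∈ O <;> simp [hx]

lemma lintegral_enorm_sq_eq_ofReal {α F : Type*} [MeasurableSpace α] {ν : Measure α}
    [NormedAddCommGroup F] {f : α → F} (hf : Integrable (fun x => ‖f x‖ ^ 2) ν) :
    ∫⁻ x, ‖f x‖ₑ ^ 2 ∂ν = ENNReal.ofReal (∫ x, ‖f x‖ ^ 2 ∂ν) := by
  rw [ofReal_integral_eq_lintegral_ofReal hf (.of_forall fun x => by positivity)]
  simp only [ENNReal.ofReal_pow (norm_nonneg _), ofReal_norm]

lemma integrable_sq_toReal_and_integral_le {α : Type*} [MeasurableSpace α] {ν : Measure α}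
    {Φ : α → ℝ≥0∞} (hΦ : Measurable Φ) {c : ℝ} (hc : 0 ≤ c)
    (hle : ∫⁻ x, Φ x ^ 2 ∂ν ≤ ENNReal.ofReal c) :
    (∀ᵐ x ∂ν, Φ x ≠ ∞) ∧ Integrable (fun x => (Φ x).toReal ^ 2) ν ∧
      ∫ x, (Φ x).toReal ^ 2 ∂ν ≤ c := by
  have hfin : ∫⁻ x, Φ x ^ 2 ∂ν ≠ ∞ := ne_top_of_le_ne_top ENNReal.ofReal_ne_top hle
  have hae : ∀ᵐ x ∂ν, Φ x ^ 2 < ∞ := ae_lt_top (by fun_prop) hfin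
  simp only [← ENNReal.toReal_pow]
  refine ⟨hae.mono fun x hx => by simpa using hx.ne,
    integrable_toReal_of_lintegral_ne_top (by fun_prop) hfin, ?_⟩
  rw [integral_toReal (by fun_prop) hae]
  exact ENNReal.toReal_le_of_le_ofReal hc hle

/-- The functions `Φ` which, together with a bound `A` for `‖U‖`, control at almost every point of
`O` the derivatives of `U` of order at most `k` at all length scales `h`. -/
structure IsInterpolationMajorant (μ : Measure E) (O : Set E) (k : ℕ) (U : E → G) (C A : ℝ)
    (Φ : E → ℝ) : Prop where
  nonneg : ∀ x, 0 ≤ Φ x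
  integrableOn_sq : IntegrableOn (fun x => Φ x ^ 2) O μ
  integral_sq_le : ∫ x in O, Φ x ^ 2 ∂μ ≤ C * ∫ x in O, ‖iteratedFDeriv ℝ k U x‖ ^ 2 ∂μ
  norm_le : ∀ᵐ x ∂μ.restrict O, ‖iteratedFDeriv ℝ k U x‖ ≤ Φ x
  pow_mul_norm_le : ∀ᵐ x ∂μ.restrict O, ∀ h : ℝ, 0 < h → ∀ i ≤ k,
    h ^ i * ‖iteratedFDeriv ℝ i U x‖ ≤ C * (A + h ^ k * Φ x)

variable (G μ) in
theorem exists_isInterpolationMajorant [CompleteSpace G] (hO : IsOpen O)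
    (hcone : (interior (recessionCone O)).Nonempty) (k : ℕ) :
    ∃ C : ℝ, 0 ≤ C ∧ ∀ (U : E → G) (A : ℝ), ContDiffOn ℝ k U O → (∀ x ∈ O, ‖U x‖ ≤ A) →
      IntegrableOn (fun x => ‖iteratedFDeriv ℝ k U x‖ ^ 2) O μ →
      ∃ Φ : E → ℝ, IsInterpolationMajorant μ O k U C A Φ := by
  obtain ⟨V, hV, C, hC, hpoint⟩ :=
    exists_finset_pow_mul_norm_iteratedFDeriv_le_derivMaximal G hO hcone k
  refine ⟨max C (4 * V.card ^ 2), by positivity, fun U A hU hA hint => ?_⟩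
  have hL2 : ∫⁻ x in O, derivMaximal V O k U x ^ 2 ∂μ ≤
      ENNReal.ofReal (4 * V.card ^ 2 * ∫ x in O, ‖iteratedFDeriv ℝ k U x‖ ^ 2 ∂μ) := by
    refine (setLIntegral_le_lintegral O _).trans
      ((lintegral_derivMaximal_sq_le hO hU V).trans_eq ?_)
    rw [lintegral_enorm_sq_eq_ofReal hint, ENNReal.ofReal_mul (by positivity)]
    simp [ENNReal.ofReal_mul, ENNReal.ofReal_pow]
  obtain ⟨hfin, hΦ, hle⟩ := integrable_sq_toReal_and_integral_le
    (measurable_multiRayMaximal (measurable_indicator_enorm_iteratedFDeriv hO hU) V)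
    (by positivity) hL2
  have hmem : ∀ᵐ x ∂μ.restrict O, x ∈ O := ae_restrict_mem hO.measurableSet
  refine ⟨fun x => (derivMaximal V O k U x).toReal, fun x => ENNReal.toReal_nonneg, hΦ, ?_, ?_, ?_⟩
  · refine hle.trans ?_
    gcongr
    exact le_max_right _ _
  · filter_upwards [hfin, hmem] with x hx hxO
    exact norm_iteratedFDeriv_le_derivMaximal hV hxO hx
  · filter_upwards [hfin, hmem] with x hx hxO h hh i hi
    have hA₀ : 0 ≤ A := (norm_nonneg _).trans (hA x hxO)
    refine (hpoint U A hU hA x hxO hx h hh i hi).trans ?_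
    gcongr
    exact le_max_left _ _

end MaximalMajorant

section ScaleOptimization

variable {k i : ℕ} {C D A B φ γ X Y : ℝ}

-- The scale `h = (A / φ) ^ (1 / k)` balances the two terms of `A + hᵏ φ`.
lemma mul_le_of_forall_pow_mul_le_of_pos (hk : k ≠ 0) (hi : i ≤ k) (hC : 0 ≤ C)
    (hA : 0 < A) (hφ : 0 < φ) (hY : 0 ≤ Y)
    (hX_le : ∀ h : ℝ, 0 < h → h ^ i * X ≤ C * (A + h ^ k * φ))
    (hY_le : ∀ h : ℝ, 0 < h → h ^ (k - i) * Y ≤ D * (B + h ^ k * γ)) :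
    X * Y ≤ 2 * (C * D) * (A * γ + φ * B) := by
  obtain ⟨h, hh, hhk⟩ : ∃ h : ℝ, 0 < h ∧ h ^ k = A / φ :=
    ⟨(A / φ) ^ (k⁻¹ : ℝ), by positivity, rpow_inv_natCast_pow (by positivity) hk⟩
  have hbalance : h ^ k * φ = A := by rw [hhk, div_mul_cancel₀ _ hφ.ne']
  refine le_of_mul_le_mul_left ?_ (pow_pos hh k)
  calc h ^ k * (X * Y) = h ^ i * X * (h ^ (k - i) * Y) := by
        rw [← pow_mul_pow_sub h hi]; ring
    _ ≤ C * (A + h ^ k * φ) * (D * (B + h ^ k * γ)) :=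
        mul_le_mul (hX_le h hh) (hY_le h hh) (by positivity) (by positivity)
    _ = h ^ k * (2 * (C * D) * (A * γ + φ * B)) := by
        linear_combination (C * D * (B + h ^ k * γ) - 2 * C * D * B) * hbalance

lemma mul_le_of_forall_pow_mul_le (hk : k ≠ 0) (hi : i ≤ k) (hC : 0 ≤ C)
    (hA : 0 ≤ A) (hφ : 0 ≤ φ) (hY : 0 ≤ Y)
    (hX_le : ∀ h : ℝ, 0 < h → h ^ i * X ≤ C * (A + h ^ k * φ))
    (hY_le : ∀ h : ℝ, 0 < h → h ^ (k - i) * Y ≤ D * (B + h ^ k * γ)) :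
    X * Y ≤ 2 * (C * D) * (A * γ + φ * B) := by
  have hperturbed : ∀ δ : ℝ, 0 < δ → X * Y ≤ 2 * (C * D) * ((A + δ) * γ + (φ + δ) * B) := by
    refine fun δ hδ => mul_le_of_forall_pow_mul_le_of_pos hk hi hC (by positivity)
      (by positivity) hY (fun h hh => (hX_le h hh).trans ?_) hY_le
    gcongr <;> linarith
  have hlim : Tendsto (fun δ : ℝ => 2 * (C * D) * ((A + δ) * γ + (φ + δ) * B)) (𝓝[>] 0)
      (𝓝 (2 * (C * D) * ((A + 0) * γ + (φ + 0) * B))) :=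
    (Continuous.tendsto (by fun_prop) 0).mono_left nhdsWithin_le_nhds
  simpa using ge_of_tendsto hlim (eventually_mem_nhdsWithin.mono hperturbed)

end ScaleOptimization

section LeibnizCommutator

variable {E G : Type*} [NormedAddCommGroup E] [NormedSpace ℝ E] [NormedAddCommGroup G]
  [NormedSpace ℝ G] {O : Set E} {n : ℕ} {f : E → ℝ} {g : E → G} {x : E}

/-- The commutator `[∇ⁿ, f] g` of the `n`-th derivative with multiplication by `f`. -/
def derivCommutator (n : ℕ) (f : E → ℝ) (g : E → G) (x : E) : E [×n]→L[ℝ] G :=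
  iteratedFDeriv ℝ n (fun y => f y • g y) x - f x • iteratedFDeriv ℝ n g x

lemma derivCommutator_eq_iteratedFDeriv_sub_smul (hf : ContDiffAt ℝ n f x)
    (hg : ContDiffAt ℝ n g x) :
    derivCommutator n f g x = iteratedFDeriv ℝ n (fun y => (f y - f x) • g y) x := by
  simp only [sub_smul]
  rw [derivCommutator, ← iteratedFDeriv_const_smul_apply' hg]
  exact (fun_iteratedFDeriv_sub_apply (hf.smul hg) (hg.const_smul (f x))).symm

lemma norm_derivCommutator_succ_le (hO : IsOpen O) (hf : ContDiffOn ℝ (n + 1 : ℕ) f O)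
    (hg : ContDiffOn ℝ (n + 1 : ℕ) g O) (hx : x ∈ O) :
    ‖derivCommutator (n + 1) f g x‖ ≤ ∑ i ∈ Finset.range (n + 1), ((n + 1).choose (i + 1) : ℝ) *
      (‖iteratedFDeriv ℝ i (fderiv ℝ f) x‖ * ‖iteratedFDeriv ℝ (n - i) g x‖) := by
  have hleibniz := norm_iteratedFDerivWithin_smul_le (hf.sub (contDiffOn_const (c := f x))) hg
    hO.uniqueDiffOn hx (n := n + 1) le_rfl
  simp only [iteratedFDerivWithin_of_isOpen _ hO hx] at hleibniz
  rw [derivCommutator_eq_iteratedFDeriv_sub_smul (hf.contDiffAt (hO.mem_nhds hx))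
    (hg.contDiffAt (hO.mem_nhds hx))]
  refine hleibniz.trans_eq ?_
  have hfderiv : fderiv ℝ (fun y => f y - f x) = fderiv ℝ f := funext fun y => fderiv_sub_const _
  -- The term without derivatives on `f - f x` vanishes at `x`.
  rw [Finset.sum_range_succ']
  simp only [norm_iteratedFDeriv_zero, sub_self, norm_zero, mul_zero, zero_mul, add_zero,
    ← norm_iteratedFDeriv_fderiv, mul_assoc, hfderiv]
  exact Finset.sum_congr rfl fun i _ => by rw [Nat.add_sub_add_right]

lemma norm_derivCommutator_succ_le_of_forall_mul_le (hO : IsOpen O)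
    (hf : ContDiffOn ℝ (n + 1 : ℕ) f O) (hg : ContDiffOn ℝ (n + 1 : ℕ) g O) (hx : x ∈ O) {c : ℝ}
    (hc : ∀ i ≤ n, ‖iteratedFDeriv ℝ i (fderiv ℝ f) x‖ * ‖iteratedFDeriv ℝ (n - i) g x‖ ≤ c) :
    ‖derivCommutator (n + 1) f g x‖ ≤ 2 ^ (n + 1) * c := by
  have hc₀ : 0 ≤ c := le_trans (by positivity) (hc 0 n.zero_le)
  have hsum : ∑ i ∈ Finset.range (n + 1), ((n + 1).choose (i + 1) : ℝ) ≤ 2 ^ (n + 1) := by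
    have h := Nat.sum_range_choose (n + 1)
    rw [Finset.sum_range_succ'] at h
    exact_mod_cast h ▸ Nat.le_add_right _ _
  calc ‖derivCommutator (n + 1) f g x‖
      ≤ ∑ i ∈ Finset.range (n + 1), ((n + 1).choose (i + 1) : ℝ) * c := by
        refine (norm_derivCommutator_succ_le hO hf hg hx).trans (Finset.sum_le_sum fun i hi => ?_)
        gcongr
        exact hc i (Finset.mem_range_succ_iff.1 hi)
    _ ≤ 2 ^ (n + 1) * c := by
        rw [← Finset.sum_mul]
        gcongr

end LeibnizCommutator

section CommutatorEstimate

variable {E F G : Type*} [NormedAddCommGroup E] [NormedSpace ℝ E] [MeasurableSpace E]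
  [NormedAddCommGroup F] [NormedSpace ℝ F] [NormedAddCommGroup G] [NormedSpace ℝ G]
  {μ : Measure E} {O : Set E} {k : ℕ}

lemma ae_norm_mul_norm_le_of_isInterpolationMajorant {U : E → F} {W : E → G}
    {C D A B : ℝ} {Φ Γ : E → ℝ} (hO : MeasurableSet O) (hC : 0 ≤ C) (hD : 0 ≤ D)
    (hA : ∀ x ∈ O, ‖U x‖ ≤ A) (hB : 0 ≤ B)
    (hΦ : IsInterpolationMajorant μ O k U C A Φ) (hΓ : IsInterpolationMajorant μ O k W D B Γ) :
    ∀ᵐ x ∂μ.restrict O, ∀ i ≤ k, ‖iteratedFDeriv ℝ i U x‖ * ‖iteratedFDeriv ℝ (k - i) W x‖ ≤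
      (2 * (C * D) + 1) * (A * Γ x + Φ x * B) := by
  filter_upwards [hΦ.pow_mul_norm_le, hΓ.norm_le, hΓ.pow_mul_norm_le, ae_restrict_mem hO]
    with x hU hW_top hW hx i hi
  have hA₀ : 0 ≤ A := (norm_nonneg _).trans (hA x hx)
  have hAΓ : 0 ≤ A * Γ x := mul_nonneg hA₀ (hΓ.nonneg x)
  have hΦB : 0 ≤ Φ x * B := mul_nonneg (hΦ.nonneg x) hB
  have hCD : 0 ≤ 2 * (C * D) := by positivity
  rcases Nat.eq_zero_or_pos i with rfl | hi₀
  · calc ‖iteratedFDeriv ℝ 0 U x‖ * ‖iteratedFDeriv ℝ (k - 0) W x‖ ≤ A * Γ x := by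
          rw [norm_iteratedFDeriv_zero]
          exact mul_le_mul (hA x hx) hW_top (norm_nonneg _) hA₀
      _ ≤ (2 * (C * D) + 1) * (A * Γ x + Φ x * B) := by nlinarith
  · have hprod := mul_le_of_forall_pow_mul_le (by omega) hi hC hA₀ (hΦ.nonneg x)
      (norm_nonneg _) (fun h hh => hU h hh i hi) (fun h hh => hW h hh (k - i) (Nat.sub_le k i))
    linarith

lemma integral_sq_norm_le_of_ae_norm_le {α H : Type*} [MeasurableSpace α] {ν : Measure α}
    [NormedAddCommGroup H] {N : α → H} {Φ Γ : α → ℝ} {K A B : ℝ}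
    (hΦ : Integrable (fun x => Φ x ^ 2) ν)
    (hΓ : Integrable (fun x => Γ x ^ 2) ν) (hN : ∀ᵐ x ∂ν, ‖N x‖ ≤ K * (A * Γ x + Φ x * B)) :
    ∫ x, ‖N x‖ ^ 2 ∂ν ≤ 2 * K ^ 2 * (A ^ 2 * ∫ x, Γ x ^ 2 ∂ν + B ^ 2 * ∫ x, Φ x ^ 2 ∂ν) := by
  calc ∫ x, ‖N x‖ ^ 2 ∂ν ≤ ∫ x, 2 * K ^ 2 * (A ^ 2 * Γ x ^ 2 + B ^ 2 * Φ x ^ 2) ∂ν := by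
        refine integral_mono_of_nonneg (.of_forall fun x => by positivity)
          (((hΓ.const_mul _).add (hΦ.const_mul _)).const_mul _) ?_
        filter_upwards [hN] with x hx
        calc ‖N x‖ ^ 2 ≤ (K * (A * Γ x + Φ x * B)) ^ 2 := by gcongr
          _ ≤ 2 * K ^ 2 * (A ^ 2 * Γ x ^ 2 + B ^ 2 * Φ x ^ 2) := by
              linarith [sq_nonneg (K * (A * Γ x - Φ x * B))]
    _ = 2 * K ^ 2 * (A ^ 2 * ∫ x, Γ x ^ 2 ∂ν + B ^ 2 * ∫ x, Φ x ^ 2 ∂ν) := by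
        rw [integral_const_mul, integral_add (hΓ.const_mul _) (hΦ.const_mul _),
          integral_const_mul, integral_const_mul]

variable [FiniteDimensional ℝ E] [BorelSpace E] [SFinite μ] [μ.IsAddRightInvariant]

variable (G μ) in
theorem exists_integral_sq_derivCommutator_le [CompleteSpace G] (hO : IsOpen O)
    (hcone : (interior (recessionCone O)).Nonempty) (k : ℕ) :
    ∃ C : ℝ, 0 < C ∧ ∀ (f : E → ℝ) (g : E → G) (A B : ℝ),
      ContDiffOn ℝ (k + 1) f O → ContDiffOn ℝ (k + 1) g O →
      (∀ x ∈ O, ‖fderiv ℝ f x‖ ≤ A) → (∀ x ∈ O, ‖g x‖ ≤ B) →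
      IntegrableOn (fun x => ‖iteratedFDeriv ℝ k (fderiv ℝ f) x‖ ^ 2) O μ →
      IntegrableOn (fun x => ‖iteratedFDeriv ℝ k g x‖ ^ 2) O μ →
      ∫ x in O, ‖derivCommutator (k + 1) f g x‖ ^ 2 ∂μ ≤
        C * (A ^ 2 * ∫ x in O, ‖iteratedFDeriv ℝ k g x‖ ^ 2 ∂μ +
          B ^ 2 * ∫ x in O, ‖iteratedFDeriv ℝ k (fderiv ℝ f) x‖ ^ 2 ∂μ) := by
  obtain ⟨C, hC, hmajF⟩ := exists_isInterpolationMajorant (E →L[ℝ] ℝ) μ hO hcone k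
  obtain ⟨D, hD, hmajG⟩ := exists_isInterpolationMajorant G μ hO hcone k
  set K : ℝ := 2 ^ (k + 1) * (2 * (C * D) + 1)
  refine ⟨2 * K ^ 2 * (C + D + 1), by positivity, fun f g A B hf hg hA hB hfint hgint => ?_⟩
  rcases O.eq_empty_or_nonempty with rfl | ⟨x₀, hx₀⟩
  · simp
  have hB₀ : 0 ≤ B := (norm_nonneg _).trans (hB x₀ hx₀)
  obtain ⟨Φ, hΦ⟩ := hmajF (fderiv ℝ f) A (hf.fderiv_of_isOpen hO le_rfl) hA hfint
  obtain ⟨Γ, hΓ⟩ := hmajG g B (hg.of_le le_self_add) hB hgint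
  have hpoint : ∀ᵐ x ∂μ.restrict O,
      ‖derivCommutator (k + 1) f g x‖ ≤ K * (A * Γ x + Φ x * B) := by
    filter_upwards [ae_restrict_mem hO.measurableSet,
      ae_norm_mul_norm_le_of_isInterpolationMajorant hO.measurableSet hC hD hA hB₀ hΦ hΓ]
      with x hx hmul
    rw [mul_assoc]
    exact norm_derivCommutator_succ_le_of_forall_mul_le hO (by exact_mod_cast hf)
      (by exact_mod_cast hg) hx hmul
  refine (integral_sq_norm_le_of_ae_norm_le hΦ.integrableOn_sq hΓ.integrableOn_sq hpoint).trans ?_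
  rw [mul_assoc (2 * K ^ 2), mul_add (C + D + 1), mul_left_comm _ (A ^ 2), mul_left_comm _ (B ^ 2)]
  gcongr
  · exact hΓ.integral_sq_le.trans (by gcongr; linarith)
  · exact hΦ.integral_sq_le.trans (by gcongr; linarith)

end CommutatorEstimate

section PlanarSobolev

variable {E G : Type*} [NormedAddCommGroup E] [NormedSpace ℝ E] [NormedAddCommGroup G]
  [NormedSpace ℝ G]

lemma enorm_zero_le_lintegral_add_deriv [CompleteSpace G] {φ φ' : ℝ → G}
    (hφ : ∀ t, HasDerivAt φ (φ' t) t) (hφ' : Continuous φ') :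
    ‖φ 0‖ₑ ≤ ∫⁻ t in Ioc (0 : ℝ) 1, (‖φ t‖ₑ + ‖φ' t‖ₑ) := by
  have hcont : Continuous φ := continuous_iff_continuousAt.2 fun t => (hφ t).continuousAt
  have hpoint : ∀ t ∈ Ioc (0 : ℝ) 1, ‖φ 0‖ₑ ≤ ‖φ t‖ₑ + ∫⁻ s in Ioc (0 : ℝ) 1, ‖φ' s‖ₑ := by
    intro t ht
    have hftc : ∫ s in (0 : ℝ)..t, φ' s = φ t - φ 0 :=
      intervalIntegral.integral_eq_sub_of_hasDerivAt (fun s _ => hφ s) (hφ'.intervalIntegrable _ _)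
    calc ‖φ 0‖ₑ = ‖φ t - ∫ s in (0 : ℝ)..t, φ' s‖ₑ := by rw [hftc, sub_sub_cancel]
      _ ≤ ‖φ t‖ₑ + ‖∫ s in (0 : ℝ)..t, φ' s‖ₑ := enorm_sub_le
      _ ≤ ‖φ t‖ₑ + ∫⁻ s in Ioc (0 : ℝ) 1, ‖φ' s‖ₑ := by
        rw [intervalIntegral.integral_of_le ht.1.le]
        gcongr
        exact (enorm_integral_le_lintegral_enorm _).trans
          (lintegral_mono_set (Ioc_subset_Ioc_right ht.2))
  calc ‖φ 0‖ₑ = ∫⁻ _ in Ioc (0 : ℝ) 1, ‖φ 0‖ₑ := by simp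
    _ ≤ ∫⁻ t in Ioc (0 : ℝ) 1, (‖φ t‖ₑ + ∫⁻ s in Ioc (0 : ℝ) 1, ‖φ' s‖ₑ) :=
        setLIntegral_mono' measurableSet_Ioc hpoint
    _ = ∫⁻ t in Ioc (0 : ℝ) 1, (‖φ t‖ₑ + ‖φ' t‖ₑ) := by
        rw [lintegral_add_left hcont.enorm.measurable, lintegral_add_left hcont.enorm.measurable]
        simp

lemma enorm_le_lintegral_segment_add_fderiv [CompleteSpace G] {U : E → G} (hU : ContDiff ℝ 1 U)
    {e : E} (he : ‖e‖ ≤ 1) (x : E) :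
    ‖U x‖ₑ ≤ ∫⁻ t in Ioc (0 : ℝ) 1, (‖U (x + t • e)‖ₑ + ‖fderiv ℝ U (x + t • e)‖ₑ) := by
  have hderiv : ∀ t : ℝ, HasDerivAt (fun t : ℝ => U (x + t • e)) (fderiv ℝ U (x + t • e) e) t :=
    fun t => (hU.differentiable one_ne_zero _).hasFDerivAt.comp_hasDerivAt t
      (by simpa using ((hasDerivAt_id t).smul_const e).const_add x)
  have hline := enorm_zero_le_lintegral_add_deriv hderiv (by fun_prop)
  simp only [zero_smul, add_zero] at hline
  refine hline.trans (lintegral_mono fun t => ?_)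
  gcongr
  rw [enorm_le_iff_norm_le]
  exact ContinuousLinearMap.unit_le_opNorm _ _ he

lemma enorm_iteratedFDeriv_le_lintegral_segment {U : E → G} {n : ℕ} [CompleteSpace G]
    (hU : ContDiff ℝ (n + 1 : ℕ) U) {e : E} (he : ‖e‖ ≤ 1) (x : E) :
    ‖iteratedFDeriv ℝ n U x‖ₑ ≤ ∫⁻ t in Ioc (0 : ℝ) 1,
      (‖iteratedFDeriv ℝ n U (x + t • e)‖ₑ + ‖iteratedFDeriv ℝ (n + 1) U (x + t • e)‖ₑ) := by
  have hderiv (y : E) : ‖fderiv ℝ (iteratedFDeriv ℝ n U) y‖ₑ = ‖iteratedFDeriv ℝ (n + 1) U y‖ₑ := by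
    rw [← enorm_norm, norm_fderiv_iteratedFDeriv, enorm_norm]
  refine (enorm_le_lintegral_segment_add_fderiv
    (hU.iteratedFDeriv_right (m := 1) (by push_cast; rw [add_comm])) he x).trans_eq ?_
  exact lintegral_congr fun t => congrArg (_ + ·) (hderiv _)

lemma lintegral_lintegral_add_axes {w : E2 → ℝ≥0∞} (hw : Measurable w) (x : E2) :
    ∫⁻ t : ℝ, ∫⁻ s : ℝ, w (x + t • EuclideanSpace.single 0 1 + s • EuclideanSpace.single 1 1) =
      ∫⁻ y, w y := by
  have hpres := (PiLp.volume_preserving_toLp (Fin 2)).comp (volume_preserving_finTwoArrow ℝ).symm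
  rw [← lintegral_add_left_eq_self w x, ← hpres.lintegral_comp (by fun_prop),
    Measure.volume_eq_prod, lintegral_prod _
      (by exact ((hw.comp (measurable_const_add x)).comp hpres.measurable).aemeasurable)]
  refine lintegral_congr fun t => lintegral_congr fun s => ?_
  rw [add_assoc]
  congr 2
  ext i
  fin_cases i <;> simp [MeasurableEquiv.finTwoArrow]

lemma measurable_enorm_iteratedFDeriv [MeasurableSpace E] [OpensMeasurableSpace E] {U : E → G}
    {m n : ℕ} (hU : ContDiff ℝ m U) (hn : n ≤ m) : Measurable fun y => ‖iteratedFDeriv ℝ n U y‖ₑ :=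
  (hU.continuous_iteratedFDeriv (by exact_mod_cast hn)).enorm.measurable

lemma enorm_le_lintegral_unit_square [CompleteSpace G] {U : E2 → G} (hU : ContDiff ℝ 2 U) (x : E2) :
    ‖U x‖ₑ ≤ ∫⁻ t in Ioc (0 : ℝ) 1, ∫⁻ s in Ioc (0 : ℝ) 1,
      ∑ i ∈ Finset.range 2, ∑ j ∈ Finset.range 2, ‖iteratedFDeriv ℝ (i + j) U
        (x + t • EuclideanSpace.single 0 1 + s • EuclideanSpace.single 1 1)‖ₑ := by
  have hsegment (n : ℕ) (hn : n + 1 ≤ 2) (i : Fin 2) (y : E2) :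
      ‖iteratedFDeriv ℝ n U y‖ₑ ≤ ∫⁻ t in Ioc (0 : ℝ) 1, ∑ j ∈ Finset.range 2,
        ‖iteratedFDeriv ℝ (n + j) U (y + t • EuclideanSpace.single i 1)‖ₑ := by
    simpa [Finset.sum_range_succ] using enorm_iteratedFDeriv_le_lintegral_segment
      (hU.of_le (by exact_mod_cast hn)) (e := EuclideanSpace.single i 1) (by simp) y
  calc ‖U x‖ₑ = ‖iteratedFDeriv ℝ 0 U x‖ₑ := by simp [← enorm_norm]
    _ ≤ ∫⁻ t in Ioc (0 : ℝ) 1, ∑ i ∈ Finset.range 2,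
          ‖iteratedFDeriv ℝ i U (x + t • EuclideanSpace.single 0 1)‖ₑ :=
        (hsegment 0 (by norm_num) 0 x).trans_eq
          (lintegral_congr fun t => Finset.sum_congr rfl fun i _ => by rw [zero_add])
    _ ≤ ∫⁻ t in Ioc (0 : ℝ) 1, ∑ i ∈ Finset.range 2, ∫⁻ s in Ioc (0 : ℝ) 1,
          ∑ j ∈ Finset.range 2, ‖iteratedFDeriv ℝ (i + j) U
            (x + t • EuclideanSpace.single 0 1 + s • EuclideanSpace.single 1 1)‖ₑ := by
        gcongr with t i hi
        exact hsegment i (Finset.mem_range.1 hi) 1 _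
    _ = _ := by
        refine lintegral_congr fun t => (lintegral_finsetSum _ fun i hi => ?_).symm
        refine Finset.measurable_sum _ fun j hj =>
          (measurable_enorm_iteratedFDeriv (m := 2) hU ?_).comp (by fun_prop)
        simp only [Finset.mem_range] at hi hj
        omega

lemma sum_sum_range_two_add_le (a : ℕ → ℝ≥0∞) :
    ∑ i ∈ Finset.range 2, ∑ j ∈ Finset.range 2, a (i + j) ≤
      4 + 2 * ∑ n ∈ Finset.range 3, a n ^ 2 := by
  have hle (n : ℕ) : a n ≤ 1 + a n ^ 2 := by
    rcases le_total (a n) 1 with h | h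
    · exact h.trans le_self_add
    · exact (le_self_pow h two_ne_zero).trans le_add_self
  calc ∑ i ∈ Finset.range 2, ∑ j ∈ Finset.range 2, a (i + j) = a 0 + 2 * a 1 + a 2 := by
        simp only [Finset.sum_range_succ, Finset.sum_range_zero]
        ring_nf
    _ ≤ (1 + a 0 ^ 2) + 2 * (1 + a 1 ^ 2) + (1 + a 2 ^ 2) := by gcongr <;> exact hle _
    _ ≤ (1 + 2 * a 0 ^ 2) + 2 * (1 + a 1 ^ 2) + (1 + 2 * a 2 ^ 2) := by
        gcongr <;> exact le_mul_of_one_le_left' one_le_two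
    _ = 4 + 2 * ∑ n ∈ Finset.range 3, a n ^ 2 := by
        simp only [Finset.sum_range_succ, Finset.sum_range_zero]
        ring

lemma setLIntegral_unit_add_le (c : ℝ≥0∞) (w : ℝ → ℝ≥0∞) :
    ∫⁻ t in Ioc (0 : ℝ) 1, (c + w t) ≤ c + ∫⁻ t, w t := by
  rw [lintegral_add_left measurable_const]
  gcongr
  · simp
  · exact Measure.restrict_le_self

lemma enorm_le_four_add_lintegral_sq [CompleteSpace G] {U : E2 → G} (hU : ContDiff ℝ 2 U) (x : E2) :
    ‖U x‖ₑ ≤ 4 + ∫⁻ y, 2 * ∑ n ∈ Finset.range 3, ‖iteratedFDeriv ℝ n U y‖ₑ ^ 2 := by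
  have hmeas : Measurable fun y => 2 * ∑ n ∈ Finset.range 3, ‖iteratedFDeriv ℝ n U y‖ₑ ^ 2 :=
    (Finset.measurable_sum _ fun n hn => (measurable_enorm_iteratedFDeriv hU
      (Finset.mem_range_succ_iff.1 hn)).pow_const 2).const_mul 2
  rw [← lintegral_lintegral_add_axes hmeas x]
  refine (enorm_le_lintegral_unit_square hU x).trans (le_trans ?_ (setLIntegral_unit_add_le _ _))
  refine lintegral_mono fun t => le_trans ?_ (setLIntegral_unit_add_le _ _)
  exact lintegral_mono fun s => sum_sum_range_two_add_le fun n => ‖iteratedFDeriv ℝ n U _‖ₑ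

theorem exists_nnnorm_le_of_integrable_sq_iteratedFDeriv [CompleteSpace G] {U : E2 → G}
    (hU : ContDiff ℝ 2 U) (hint : ∀ j ≤ 2, Integrable fun y => ‖iteratedFDeriv ℝ j U y‖ ^ 2) :
    ∃ L : ℝ≥0, ∀ x, ‖U x‖₊ ≤ L := by
  have hfin : ∫⁻ y, 2 * ∑ n ∈ Finset.range 3, ‖iteratedFDeriv ℝ n U y‖ₑ ^ 2 ≠ ∞ := by
    rw [lintegral_const_mul' _ _ ENNReal.ofNat_ne_top, lintegral_finsetSum _ fun n hn =>
      (measurable_enorm_iteratedFDeriv hU (Finset.mem_range_succ_iff.1 hn)).pow_const 2]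
    refine ENNReal.mul_ne_top ENNReal.ofNat_ne_top (ENNReal.sum_ne_top.2 fun n hn => ?_)
    rw [lintegral_enorm_sq_eq_ofReal (hint n (Finset.mem_range_succ_iff.1 hn))]
    exact ENNReal.ofReal_ne_top
  refine ⟨(4 + ∫⁻ y, 2 * ∑ n ∈ Finset.range 3, ‖iteratedFDeriv ℝ n U y‖ₑ ^ 2).toNNReal,
    fun x => ?_⟩
  rw [← ENNReal.coe_le_coe, ENNReal.coe_toNNReal (by finiteness)]
  exact enorm_le_four_add_lintegral_sq hU x

lemma exists_lipschitzWith_of_integrable_sq_iteratedFDeriv [CompleteSpace G] {M : E2 → G}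
    (hM : ContDiff ℝ 3 M)
    (hint : ∀ j ≤ 3, Integrable fun y => ‖iteratedFDeriv ℝ j M y‖ ^ 2) :
    ∃ L : ℝ≥0, LipschitzWith L M := by
  obtain ⟨L, hL⟩ := exists_nnnorm_le_of_integrable_sq_iteratedFDeriv
    (hM.fderiv_right (m := 2) (by norm_num)) fun j hj => by
      simpa only [norm_iteratedFDeriv_fderiv] using hint (j + 1) (by omega)
  exact ⟨L, lipschitzWith_of_nnnorm_fderiv_le (hM.differentiable (by norm_num)) hL⟩

end PlanarSobolev

section PerturbedHalfSpace

variable {M : E2 → ℝ}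

lemma proj2_add_smul (x v : E3) (t : ℝ) : proj2 (x + t • v) = proj2 x + t • proj2 v := by
  ext i
  fin_cases i <;> simp [proj2]

lemma proj2_single_zero (a : ℝ) : proj2 (EuclideanSpace.single 0 a) = 0 := by
  ext i
  fin_cases i <;> simp [proj2]

lemma continuous_proj2 : Continuous proj2 := by
  refine (PiLp.continuous_toLp 2 fun _ : Fin 2 => ℝ).comp (continuous_pi fun i => ?_)
  fin_cases i
  · exact (EuclideanSpace.proj (𝕜 := ℝ) (1 : Fin 3)).continuous
  · exact (EuclideanSpace.proj (𝕜 := ℝ) (2 : Fin 3)).continuous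

lemma isOpen_Omg (hM : Continuous M) : IsOpen (Omg M) :=
  isOpen_lt (hM.comp continuous_proj2) (by fun_prop)

lemma nonempty_Omg (M : E2 → ℝ) : (Omg M).Nonempty :=
  ⟨EuclideanSpace.single 0 (M 0 + 1), by simp [Omg, proj2_single_zero]⟩

lemma mem_recessionCone_Omg {L : ℝ≥0} (hM : LipschitzWith L M) {v : E3}
    (hv : L * ‖proj2 v‖ ≤ v 0) : v ∈ recessionCone (Omg M) := by
  intro x hx t ht
  have hlip : M (proj2 x + t • proj2 v) ≤ M (proj2 x) + t * (L * ‖proj2 v‖) := by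
    have h := hM.dist_le_mul (proj2 x + t • proj2 v) (proj2 x)
    rw [Real.dist_eq, dist_eq_norm, add_sub_cancel_left, norm_smul, norm_of_nonneg ht] at h
    linarith [le_abs_self (M (proj2 x + t • proj2 v) - M (proj2 x))]
  calc M (proj2 (x + t • v)) ≤ M (proj2 x) + t * (L * ‖proj2 v‖) := by rwa [proj2_add_smul]
    _ < x 0 + t * v 0 := add_lt_add_of_lt_of_le hx (by gcongr)
    _ = (x + t • v) 0 := by simp

lemma nonempty_interior_recessionCone_Omg {L : ℝ≥0} (hM : LipschitzWith L M) :
    (interior (recessionCone (Omg M))).Nonempty := by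
  have hopen : IsOpen {v : E3 | L * ‖proj2 v‖ < v 0} :=
    isOpen_lt (by have := continuous_proj2; fun_prop) (by fun_prop)
  have hmem : EuclideanSpace.single 0 1 ∈ {v : E3 | L * ‖proj2 v‖ < v 0} := by
    simp [proj2_single_zero]
  exact ⟨_, interior_maximal (fun v hv => mem_recessionCone_Omg hM (le_of_lt hv)) hopen hmem⟩

lemma integral_sq_iteratedFDeriv_le_sobNorm_sq {F : Type*} [NormedAddCommGroup F] [NormedSpace ℝ F]
    (m : ℕ) (O : Set E3) (f : E3 → F) :
    ∫ x in O, ‖iteratedFDeriv ℝ m f x‖ ^ 2 ≤ sobNorm m O f ^ 2 := by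
  have hnonneg (j : ℕ) : 0 ≤ ∫ x in O, ‖iteratedFDeriv ℝ j f x‖ ^ 2 :=
    integral_nonneg fun x => by positivity
  rw [sobNorm, sq_sqrt (Finset.sum_nonneg fun j _ => hnonneg j)]
  exact Finset.single_le_sum (f := fun j => ∫ x in O, ‖iteratedFDeriv ℝ j f x‖ ^ 2)
    (fun j _ => hnonneg j) (Finset.self_mem_range_succ m)

end PerturbedHalfSpace

theorem commutator_estimate_general {M : E2 → ℝ} {L : ℝ≥0} (hM : LipschitzWith L M) (k : ℕ) :
    ∃ C : ℝ, 0 < C ∧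
      ∀ (f g : E3 → ℝ) (A B : ℝ),
        ContDiffOn ℝ (k + 1) f (Omg M) →
        ContDiffOn ℝ (k + 1) g (Omg M) →
        (∀ x ∈ Omg M, ‖fderiv ℝ f x‖ ≤ A) →
        (∀ x ∈ Omg M, |g x| ≤ B) →
        IntegrableOn (fun x => ‖iteratedFDeriv ℝ k (fderiv ℝ f) x‖ ^ 2) (Omg M) →
        IntegrableOn (fun x => ‖iteratedFDeriv ℝ k g x‖ ^ 2) (Omg M) →
        Real.sqrt (∫ x in Omg M,
            ‖iteratedFDeriv ℝ (k + 1) (fun y => f y * g y) x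
              - f x • iteratedFDeriv ℝ (k + 1) g x‖ ^ 2) ≤
          C * (A * sobNorm k (Omg M) g + sobNorm k (Omg M) (fderiv ℝ f) * B) := by
  obtain ⟨C, hC, hbound⟩ := exists_integral_sq_derivCommutator_le ℝ volume
    (isOpen_Omg hM.continuous) (nonempty_interior_recessionCone_Omg hM) k
  refine ⟨√C, sqrt_pos.2 hC, fun f g A B hf hg hA hB hfint hgint => ?_⟩
  obtain ⟨x₀, hx₀⟩ := nonempty_Omg M
  have hA₀ : 0 ≤ A := (norm_nonneg _).trans (hA x₀ hx₀)
  have hB₀ : 0 ≤ B := (abs_nonneg _).trans (hB x₀ hx₀)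
  set Nf := sobNorm k (Omg M) (fderiv ℝ f)
  set Ng := sobNorm k (Omg M) g
  have hNf : 0 ≤ Nf := sqrt_nonneg _
  have hNg : 0 ≤ Ng := sqrt_nonneg _
  refine sqrt_le_iff.2 ⟨by positivity, ?_⟩
  calc ∫ x in Omg M, ‖derivCommutator (k + 1) f g x‖ ^ 2
      ≤ C * (A ^ 2 * (∫ x in Omg M, ‖iteratedFDeriv ℝ k g x‖ ^ 2) +
          B ^ 2 * ∫ x in Omg M, ‖iteratedFDeriv ℝ k (fderiv ℝ f) x‖ ^ 2) :=
        hbound f g A B hf hg hA hB hfint hgint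
    _ ≤ C * (A ^ 2 * Ng ^ 2 + B ^ 2 * Nf ^ 2) := by
        gcongr <;> exact integral_sq_iteratedFDeriv_le_sobNorm_sq _ _ _
    _ ≤ C * (A * Ng + Nf * B) ^ 2 := by
        gcongr
        have hcross : 0 ≤ A * Ng * (Nf * B) := by positivity
        linarith
    _ = (√C * (A * Ng + Nf * B)) ^ 2 := by rw [mul_pow, sq_sqrt hC.le]

theorem commutator_estimate (M : E2 → ℝ) (hM : ContDiff ℝ (⊤ : ℕ∞) M)
    (hMint : ∀ j ≤ 9, Integrable fun x' : E2 => ‖iteratedFDeriv ℝ j M x'‖ ^ 2)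
    (k : ℕ) :
    ∃ C : ℝ, 0 < C ∧
      ∀ (f g : E3 → ℝ) (A B : ℝ),
        ContDiffOn ℝ (k + 1) f (closure (Omg M)) →
        ContDiffOn ℝ (k + 1) g (closure (Omg M)) →
        (∀ x ∈ Omg M, ‖fderiv ℝ f x‖ ≤ A) →
        (∀ x ∈ Omg M, |g x| ≤ B) →
        (∀ j ≤ k, IntegrableOn (fun x => ‖iteratedFDeriv ℝ j (fderiv ℝ f) x‖ ^ 2) (Omg M)) →
        (∀ j ≤ k, IntegrableOn (fun x => ‖iteratedFDeriv ℝ j g x‖ ^ 2) (Omg M)) →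
        Real.sqrt (∫ x in Omg M,
            ‖iteratedFDeriv ℝ (k + 1) (fun y => f y * g y) x
              - f x • iteratedFDeriv ℝ (k + 1) g x‖ ^ 2) ≤
          C * (A * sobNorm k (Omg M) g + sobNorm k (Omg M) (fderiv ℝ f) * B) := by
  obtain ⟨L, hL⟩ := exists_lipschitzWith_of_integrable_sq_iteratedFDeriv
    (contDiff_infty.1 hM 3) fun j hj => hMint j (by omega)
  obtain ⟨C, hC, hbound⟩ := commutator_estimate_general hL k
  exact ⟨C, hC, fun f g A B hf hg hA hB hfint hgint => hbound f g A B (hf.mono subset_closure)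
    (hg.mono subset_closure) hA hB (hfint k le_rfl) (hgint k le_rfl)⟩
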